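/- arXiv:1602.06017 — 14 statements merged into one kernel-verified Lean document; each statement's English description precedes it below -/
import Mathlib

section
/- Let $G_1, \dots, G_k$ be finite groups whose orders are pairwise coprime, and let $G = \prod_{i=1}^k G_i$. Then $S(G) = \prod_{i=1}^k S(G_i)$. -/
/-- For a finite group `G`, `phiG G` is the number of elements of `G` whose order
equals the exponent of `G` (a group-theoretic generalization of Euler's totient). -/
noncomputable def phiG (G : Type*) [Group G] : ℕ :=
  Nat.card {a : G // orderOf a = Monoid.exponent G}

/-- `SG G` is the sum of `phiG H` over all subgroups `H` of `G`. -/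
noncomputable def SG (G : Type*) [Group G] : ℕ :=
  ∑ᶠ H : Subgroup G, phiG H

section helpers

variable {ι : Type*} [Fintype ι] [DecidableEq ι]

/-- The product of the orders of all the other factors is coprime to the order of the `i`-th. -/
lemma aux_cop (G : ι → Type*) [∀ i, Group (G i)]
    (hcop : ∀ i j, i ≠ j → Nat.Coprime (Nat.card (G i)) (Nat.card (G j))) (i : ι) :
    Nat.Coprime (Nat.card (G i)) (∏ j ∈ Finset.univ.erase i, Nat.card (G j)) :=
  Nat.Coprime.prod_right fun j hj => hcop i j (Finset.ne_of_mem_erase hj).symm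

lemma aux_single_pow (G : ι → Type*) [∀ i, Group (G i)]
    (hcop : ∀ i j, i ≠ j → Nat.Coprime (Nat.card (G i)) (Nat.card (G j))) (i : ι)
    (x : ∀ i, G i) : ∃ m : ℕ, x ^ m = Pi.mulSingle i (x i) := by
  obtain ⟨m, h1, h2⟩ := Nat.chineseRemainder (aux_cop G hcop i) 1 0
  refine ⟨m, ?_⟩
  funext j
  by_cases hij : j = i
  · subst hij
    rw [Pi.pow_apply, Pi.mulSingle_eq_same]
    have h3 : m ≡ 1 [MOD orderOf (x j)] := h1.of_dvd (orderOf_dvd_natCard _)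
    simpa using pow_eq_pow_iff_modEq.mpr h3
  · rw [Pi.pow_apply, Pi.mulSingle_eq_of_ne hij]
    apply orderOf_dvd_iff_pow_eq_one.mp
    have h3 : Nat.card (G j) ∣ ∏ j ∈ Finset.univ.erase i, Nat.card (G j) :=
      Finset.dvd_prod_of_mem _ (Finset.mem_erase.mpr ⟨hij, Finset.mem_univ _⟩)
    exact (orderOf_dvd_natCard _).trans (h3.trans (Nat.modEq_zero_iff_dvd.mp h2))

lemma aux_bij (G : ι → Type*) [∀ i, Group (G i)]
    (hcop : ∀ i j, i ≠ j → Nat.Coprime (Nat.card (G i)) (Nat.card (G j))) :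
    Function.Bijective (fun H : ∀ i, Subgroup (G i) => Subgroup.pi Set.univ H) := by
  constructor
  · intro H K h
    have key : ∀ (H : ∀ i, Subgroup (G i)) (i : ι) (g : G i),
        g ∈ H i ↔ Pi.mulSingle i g ∈ Subgroup.pi Set.univ H := by
      intro H i g
      rw [Subgroup.mem_pi]
      constructor
      · intro hg j _
        by_cases hij : j = i
        · subst hij; simpa using hg
        · rw [Pi.mulSingle_eq_of_ne hij]; exact one_mem _
      · intro h
        simpa using h i (Set.mem_univ _)
    funext i
    ext g
    rw [key H, key K]
    have h' : Subgroup.pi Set.univ H = Subgroup.pi Set.univ K := h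
    rw [h']
  · intro K
    refine ⟨fun i => K.map (Pi.evalMonoidHom G i), ?_⟩
    ext y
    simp only [Subgroup.mem_pi]
    constructor
    · intro hy
      apply Subgroup.pi_mem_of_mulSingle_mem
      intro i
      obtain ⟨x, hx, hxy⟩ := hy i (Set.mem_univ _)
      obtain ⟨m, hm⟩ := aux_single_pow G hcop i x
      have hxy' : x i = y i := hxy
      rw [← hxy', ← hm]
      exact pow_mem hx m
    · intro hy i _
      exact ⟨y, hy, rfl⟩

lemma aux_order (G : ι → Type*) [∀ i, Group (G i)] [∀ i, Finite (G i)]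
    (hcop : ∀ i j, i ≠ j → Nat.Coprime (Nat.card (G i)) (Nat.card (G j))) (a : ∀ i, G i) :
    orderOf a = Monoid.exponent (∀ i, G i) ↔ ∀ i, orderOf (a i) = Monoid.exponent (G i) := by
  constructor
  · intro h i
    apply Nat.dvd_antisymm (Monoid.order_dvd_exponent _)
    have h1 : Monoid.exponent (G i) ∣ orderOf a := by
      rw [h]
      apply Monoid.exponent_dvd_of_forall_pow_eq_one
      intro g
      have := congrFun (Monoid.pow_exponent_eq_one (Pi.mulSingle i g : ∀ i, G i)) i
      simpa using this
    have h2 : orderOf a ∣ orderOf (a i) * ∏ j ∈ Finset.univ.erase i, Nat.card (G j) := by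
      apply orderOf_dvd_of_pow_eq_one
      funext j
      rw [Pi.pow_apply, Pi.one_apply]
      apply orderOf_dvd_iff_pow_eq_one.mp
      by_cases hij : j = i
      · subst hij; exact dvd_mul_right _ _
      · exact ((orderOf_dvd_natCard _).trans (Finset.dvd_prod_of_mem (fun j => Nat.card (G j))
          (Finset.mem_erase.mpr ⟨hij, Finset.mem_univ _⟩))).trans (dvd_mul_left _ _)
    exact ((aux_cop G hcop i).coprime_dvd_left Group.exponent_dvd_nat_card).dvd_of_dvd_mul_right
      (h1.trans h2)
  · intro h
    apply Nat.dvd_antisymm (Monoid.order_dvd_exponent _)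
    apply Monoid.exponent_dvd_of_forall_pow_eq_one
    intro x
    funext i
    rw [Pi.pow_apply, Pi.one_apply]
    apply orderOf_dvd_iff_pow_eq_one.mp
    refine (Monoid.order_dvd_exponent (x i)).trans ?_
    rw [← h i]
    apply orderOf_dvd_of_pow_eq_one
    exact congrFun (pow_orderOf_eq_one a) i

lemma aux_phi (G : ι → Type*) [∀ i, Group (G i)] [∀ i, Finite (G i)]
    (hcop : ∀ i j, i ≠ j → Nat.Coprime (Nat.card (G i)) (Nat.card (G j))) :
    phiG (∀ i, G i) = ∏ i, phiG (G i) := by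
  unfold phiG
  rw [← Nat.card_pi]
  exact Nat.card_congr ((Equiv.subtypeEquivRight (aux_order G hcop)).trans
    (Equiv.subtypePiEquivPi (p := fun i (b : G i) => orderOf b = Monoid.exponent (G i))))

lemma aux_phi_congr {A B : Type*} [Group A] [Group B] (e : A ≃* B) : phiG A = phiG B := by
  unfold phiG
  refine Nat.card_congr (Equiv.subtypeEquiv e.toEquiv ?_)
  intro a
  rw [Monoid.exponent_eq_of_mulEquiv e]
  have : orderOf (e a) = orderOf a := e.orderOf_eq a
  exact iff_of_eq (congrArg (· = _) this.symm)

/-- A product subgroup is the product of its factors. -/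
def auxEquiv (G : ι → Type*) [∀ i, Group (G i)] (H : ∀ i, Subgroup (G i)) :
    Subgroup.pi Set.univ H ≃* (∀ i, H i) where
  toFun x i := ⟨x.1 i, x.2 i (Set.mem_univ _)⟩
  invFun y := ⟨fun i => (y i).1, fun i _ => (y i).2⟩
  left_inv _ := rfl
  right_inv _ := rfl
  map_mul' _ _ := rfl

end helpers

theorem stmt_0 {k : ℕ} (G : Fin k → Type*) [∀ i, Group (G i)] [∀ i, Fintype (G i)]
    (hcop : ∀ i j, i ≠ j → Nat.Coprime (Nat.card (G i)) (Nat.card (G j))) :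
    SG (∀ i, G i) = ∏ i, SG (G i) := by
  classical
  have : ∀ i, Fintype (Subgroup (G i)) := fun i => Fintype.ofFinite _
  have : Fintype (Subgroup (∀ i, G i)) := Fintype.ofFinite _
  unfold SG
  simp only [finsum_eq_sum_of_fintype]
  rw [Finset.prod_univ_sum, Fintype.piFinset_univ]
  symm
  refine Fintype.sum_bijective _ (aux_bij G hcop) _ _ ?_
  intro H
  rw [aux_phi_congr (auxEquiv G H), aux_phi]
  intro i j hij
  exact ((hcop i j hij).coprime_dvd_left (Subgroup.card_subgroup_dvd_card _)).coprime_dvd_right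
    (Subgroup.card_subgroup_dvd_card _)
end

section
/- Let $G$ be a finite nilpotent group and let $G_1, \dots, G_k$ be its Sylow subgroups (one for each prime dividing $|G|$). Then $S(G) = \prod_{i=1}^k S(G_i)$. -/
theorem phiG_congr {G H : Type*} [Group G] [Group H] (e : G ≃* H) : phiG G = phiG H := by
  unfold phiG
  refine Nat.card_congr (e.toEquiv.subtypeEquiv fun a => ?_)
  rw [Monoid.exponent_eq_of_mulEquiv e]
  simp

theorem SG_congr {G H : Type*} [Group G] [Group H] (e : G ≃* H) : SG G = SG H := by
  unfold SG
  refine finsum_eq_of_bijective e.mapSubgroup e.mapSubgroup.bijective fun K => ?_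
  exact phiG_congr (e.subgroupMap K)

theorem phiG_pi {ι : Type*} [Fintype ι] {M : ι → Type*} [∀ i, Group (M i)] [∀ i, Finite (M i)]
    (hc : Pairwise fun i j => Nat.Coprime (Nat.card (M i)) (Nat.card (M j))) :
    phiG (∀ i, M i) = ∏ i, phiG (M i) := by
  classical
  unfold phiG
  rw [← Nat.card_pi]
  refine Nat.card_congr (Equiv.trans (Equiv.subtypeEquivRight fun a => ?_)
    (Equiv.subtypePiEquivPi (p := fun i (a : M i) => orderOf a = Monoid.exponent (M i))))
  rw [Pi.orderOf, Monoid.exponent_pi]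
  constructor
  · intro h i
    refine Nat.dvd_antisymm (Monoid.order_dvd_exponent _) ?_
    have h1 : Monoid.exponent (M i) ∣ ∏ j, orderOf (a j) := by
      refine dvd_trans (Finset.dvd_lcm (f := fun j => Monoid.exponent (M j))
        (Finset.mem_univ i)) ?_
      rw [← h]
      exact Finset.lcm_dvd fun j _ => Finset.dvd_prod_of_mem _ (Finset.mem_univ j)
    rw [← Finset.mul_prod_erase _ _ (Finset.mem_univ i)] at h1
    refine Nat.Coprime.dvd_of_dvd_mul_right (Nat.Coprime.prod_right fun j hj => ?_) h1
    exact ((hc (Finset.ne_of_mem_erase hj).symm).coprime_dvd_left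
      Group.exponent_dvd_nat_card).coprime_dvd_right (orderOf_dvd_natCard _)
  · intro h
    simp only [h]

theorem mulSingle_mem {ι : Type*} [Fintype ι] [DecidableEq ι] {M : ι → Type*}
    [∀ i, Group (M i)] [∀ i, Finite (M i)]
    (hc : Pairwise fun i j => Nat.Coprime (Nat.card (M i)) (Nat.card (M j)))
    (H : Subgroup (∀ i, M i)) (x : ∀ i, M i) (hx : x ∈ H) (i : ι) :
    Pi.mulSingle i (x i) ∈ H := by
  have hco : Nat.Coprime (Nat.card (M i)) (∏ j ∈ Finset.univ.erase i, Nat.card (M j)) :=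
    Nat.Coprime.prod_right fun j hj => hc (Finset.ne_of_mem_erase hj).symm
  obtain ⟨n, hn1, hn2⟩ := Nat.chineseRemainder hco 1 0
  have : x ^ n = Pi.mulSingle i (x i) := by
    ext j
    by_cases hj : j = i
    · subst hj
      simp only [Pi.pow_apply, Pi.mulSingle_eq_same]
      conv_rhs => rw [← pow_one (x j)]
      exact pow_eq_pow_iff_modEq.2 (hn1.of_dvd (orderOf_dvd_natCard _))
    · rw [Pi.mulSingle_eq_of_ne hj, Pi.pow_apply, ← orderOf_dvd_iff_pow_eq_one]
      refine (orderOf_dvd_natCard _).trans (dvd_trans ?_ ((Nat.modEq_zero_iff_dvd).1 hn2))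
      exact Finset.dvd_prod_of_mem (fun j => Nat.card (M j)) (by simp [hj])
  exact this ▸ H.pow_mem hx n

theorem SG_pi {ι : Type*} [Fintype ι] {M : ι → Type*} [∀ i, Group (M i)] [∀ i, Finite (M i)]
    (hc : Pairwise fun i j => Nat.Coprime (Nat.card (M i)) (Nat.card (M j))) :
    SG (∀ i, M i) = ∏ i, SG (M i) := by
  classical
  have : ∀ i, Fintype (Subgroup (M i)) := fun i => Fintype.ofFinite _
  unfold SG
  simp only [finsum_eq_sum_of_fintype (α := Subgroup (M _))]
  rw [Finset.prod_univ_sum, Fintype.piFinset_univ, ← finsum_eq_sum_of_fintype]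
  symm
  refine finsum_eq_of_bijective (fun Hs : ∀ i, Subgroup (M i) => Subgroup.pi Set.univ Hs) ⟨?_, ?_⟩
    fun Hs => ?_
  · intro A B h
    ext i x
    have := congrArg (fun K => Pi.mulSingle i x ∈ K) h
    simpa [Subgroup.mulSingle_mem_pi] using this
  · intro H
    refine ⟨fun i => H.map (Pi.evalMonoidHom M i), le_antisymm ?_ ?_⟩
    · intro y hy
      refine Subgroup.pi_mem_of_mulSingle_mem y fun i => ?_
      obtain ⟨x, hx, hxy⟩ := hy i trivial
      rw [← hxy]
      exact mulSingle_mem hc H x hx i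
    · intro x hx i _
      exact ⟨x, hx, rfl⟩
  · rw [← phiG_pi (M := fun i => Hs i) fun i j hij =>
      ((hc hij).coprime_dvd_left (Hs i).card_subgroup_dvd_card).coprime_dvd_right
        (Hs j).card_subgroup_dvd_card]
    refine phiG_congr ?_
    exact
      { toFun := fun x => ⟨fun i => x i, fun i _ => (x i).2⟩
        invFun := fun x i => ⟨x.1 i, x.2 i trivial⟩
        left_inv := fun _ => rfl
        right_inv := fun _ => rfl
        map_mul' := fun _ _ => rfl }

theorem stmt_1 (G : Type*) [Group G] [Fintype G] [Group.IsNilpotent G]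
    (P : (p : (Nat.card G).primeFactors) → Sylow p G) :
    SG G = ∏ p : (Nat.card G).primeFactors, SG (P p) := by
  have hc : Pairwise fun p q : (Nat.card G).primeFactors =>
      Nat.Coprime (Nat.card (P p)) (Nat.card (P q)) := by
    rintro ⟨p, hp⟩ ⟨q, hq⟩ hne
    have := Fact.mk (Nat.prime_of_mem_primeFactors hp)
    have := Fact.mk (Nat.prime_of_mem_primeFactors hq)
    exact IsPGroup.coprime_card_of_ne p q (by simpa using hne) _ _ (P ⟨p, hp⟩).isPGroup'
      (P ⟨q, hq⟩).isPGroup'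
  rw [← SG_pi hc]
  let e := Sylow.directProductOfNormal (G := G) (fun {p} _ Q => inferInstance)
  refine SG_congr (e.symm.trans (MulEquiv.piCongrRight fun p => ?_))
  have := Fact.mk (Nat.prime_of_mem_primeFactors p.2)
  have hs : ∀ Q : Sylow p G, Q = P p := fun Q =>
    (@Unique.instSubsingleton _ (Sylow.unique_of_normal (P p) inferInstance)).elim _ _
  exact @MulEquiv.piUnique (Sylow p G) (fun Q => Q) _ { default := P p, uniq := hs }
end

section
/- Let $G$ be a finite abelian group. Then $S(G) = |G|$ if and only if $G$ is cyclic. -/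
theorem stmt_3 (G : Type*) [CommGroup G] [Fintype G] :
    SG G = Nat.card G ↔ IsCyclic G := by
  classical
  have hS : SG G = Nat.card (Σ H : Subgroup G, {a : H // orderOf a = Monoid.exponent H}) := by
    unfold SG phiG
    rw [finsum_eq_sum_of_fintype, Nat.card_sigma]
  rw [hS]
  let p : (Σ H : Subgroup G, {a : H // orderOf a = Monoid.exponent H}) → G :=
    fun x => ((x.2.1 : x.1) : G)
  have hz : ∀ a : G, orderOf (⟨a, Subgroup.mem_zpowers a⟩ : Subgroup.zpowers a)
      = Monoid.exponent (Subgroup.zpowers a) := by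
    intro a
    rw [IsCyclic.exponent_eq_card, Nat.card_zpowers, Subgroup.orderOf_mk]
  have hp : Function.Surjective p := fun a => ⟨⟨Subgroup.zpowers a, ⟨⟨a, _⟩, hz a⟩⟩, rfl⟩
  constructor
  · intro h
    have hb : Function.Bijective p := (Nat.bijective_iff_surjective_and_card p).2 ⟨hp, h⟩
    obtain ⟨a, ha⟩ := Monoid.exists_orderOf_eq_exponent
      (Monoid.ExponentExists.of_finite (G := G))
    have ht : orderOf (⟨a, Subgroup.mem_top a⟩ : (⊤ : Subgroup G))
        = Monoid.exponent (⊤ : Subgroup G) := by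
      rw [Subgroup.orderOf_mk, ha]
      exact (Monoid.exponent_eq_of_mulEquiv Subgroup.topEquiv).symm
    have he := @hb.1 ⟨Subgroup.zpowers a, ⟨⟨a, _⟩, hz a⟩⟩ ⟨⊤, ⟨⟨a, _⟩, ht⟩⟩ rfl
    have h1 : Subgroup.zpowers a = ⊤ := congrArg Sigma.fst he
    exact ⟨a, fun x => (Subgroup.eq_top_iff' _).1 h1 x⟩
  · intro h
    refine Nat.card_eq_of_bijective p ⟨?_, hp⟩
    have key : ∀ (H : Subgroup G) (a : H), orderOf a = Monoid.exponent H →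
        H = Subgroup.zpowers (a : G) := by
      intro H a ha
      rw [IsCyclic.exponent_eq_card] at ha
      symm
      apply Subgroup.eq_of_le_of_card_ge
      · simp
      · rw [Nat.card_zpowers, Subgroup.orderOf_coe, ha]
    rintro ⟨H, a, ha⟩ ⟨K, b, hb⟩ hab
    have hab' : (a : G) = b := hab
    have hHK : H = K := by rw [key H a ha, key K b hb, hab']
    subst hHK
    have : a = b := Subtype.ext hab'
    subst this
    rfl
end

section
/- Let $p$ be a prime and let $G$ be a non-abelian group of order $p^n$ with $n \geq 4$. If $G$ has a cyclic maximal subgroup (i.e., a cyclic subgroup of order $p^{n-1}$), then $S(G) > |G|$. -/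
theorem stmt_7 (p : ℕ) (hp : p.Prime) (n : ℕ) (hn : 4 ≤ n)
    (G : Type*) [Group G] [Fintype G] (hG : Nat.card G = p ^ n)
    (hna : ¬ ∀ a b : G, a * b = b * a)
    (M : Subgroup G) (hMcard : Nat.card M = p ^ (n - 1))
    (hMcyc : IsCyclic M) :
    SG G > Nat.card G := by
  classical
  have : Fintype (Subgroup G) := Fintype.ofFinite _
  -- an element of the whole group whose order is the exponent
  have hx : ∃ x : (⊤ : Subgroup G), orderOf x = Monoid.exponent (⊤ : Subgroup G) := by
    obtain ⟨g, hg⟩ := Nat.Prime.exists_orderOf_eq_pow_factorization_exponent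
      (⊤ : Subgroup G) hp
    refine ⟨g, hg.trans ?_⟩
    have hd : Monoid.exponent (⊤ : Subgroup G) ∣ p ^ n := by
      rw [← hG, ← Subgroup.card_top (G := G)]
      exact Group.exponent_dvd_nat_card
    obtain ⟨k, -, hk⟩ := (Nat.dvd_prime_pow hp).1 hd
    rw [hk, hp.factorization_pow]
    simp
  obtain ⟨x, hx⟩ := hx
  have hz : ∀ g : G, orderOf (⟨g, Subgroup.mem_zpowers g⟩ : Subgroup.zpowers g)
      = Monoid.exponent (Subgroup.zpowers g) := by
    intro g
    rw [IsCyclic.exponent_eq_card, Nat.card_zpowers, Subgroup.orderOf_mk]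
  have hnt : ∀ g : G, Subgroup.zpowers g ≠ ⊤ := by
    intro g h
    apply hna
    intro a b
    have ha : a ∈ Subgroup.zpowers g := h ▸ Subgroup.mem_top a
    have hb : b ∈ Subgroup.zpowers g := h ▸ Subgroup.mem_top b
    obtain ⟨i, rfl⟩ := ha
    obtain ⟨j, rfl⟩ := hb
    exact zpow_mul_comm g i j
  let T := Σ H : Subgroup G, {a : H // orderOf a = Monoid.exponent H}
  have hS : SG G = Nat.card T := by
    unfold SG phiG
    rw [finsum_eq_sum_of_fintype, Nat.card_sigma]
  let f : Option G → T := fun o => o.elim ⟨⊤, x, hx⟩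
    (fun g => ⟨Subgroup.zpowers g, ⟨g, Subgroup.mem_zpowers g⟩, hz g⟩)
  have hf : Function.Injective f := by
    intro a b hab
    cases a with
    | none => cases b with
      | none => rfl
      | some b => exact absurd (congrArg Sigma.fst hab).symm (hnt b)
    | some a => cases b with
      | none => exact absurd (congrArg Sigma.fst hab) (hnt a)
      | some b =>
        have := congrArg (fun t : T => ((t.2 : t.1) : G)) hab
        exact congrArg some this
  have h := Nat.card_le_card_of_injective f hf
  rw [Finite.card_option] at h
  omega
end

section
/- For every $n \geq 3$, the dihedral group $D_{2^n}$ of order $2^n$ satisfies $S(D_{2^n}) = 2^{n+1} + (n-3) \cdot 2^{n-2}$. -/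
open DihedralGroup

/-- The subgroup of rotations by `A` and reflections in the coset `o` of `A` (if any). -/
def dihSub {N : ℕ} (A : AddSubgroup (ZMod N)) (o : Option (ZMod N ⧸ A)) :
    Subgroup (DihedralGroup N) where
  carrier := {x | match x with
    | r i => i ∈ A
    | sr j => some (QuotientAddGroup.mk j : ZMod N ⧸ A) = o}
  one_mem' := by
    rw [one_def]; exact A.zero_mem
  mul_mem' := by
    rintro (a | a) (b | b) ha hb
    · exact A.add_mem ha hb
    · change some _ = o at hb
      change some _ = o
      rw [← hb]
      congr 1
      rw [QuotientAddGroup.eq]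
      simpa using ha
    · change some _ = o at ha
      change some _ = o
      rw [← ha]
      congr 1
      rw [QuotientAddGroup.eq]
      simpa using hb
    · change some _ = o at ha hb
      change b - a ∈ A
      rw [← hb, Option.some.injEq, QuotientAddGroup.eq] at ha
      rwa [sub_eq_neg_add]
  inv_mem' := by
    rintro (a | a) ha
    · exact A.neg_mem ha
    · exact ha

theorem r_mem_dihSub {N : ℕ} (A : AddSubgroup (ZMod N)) (o : Option (ZMod N ⧸ A)) (i : ZMod N) :
    r i ∈ dihSub A o ↔ i ∈ A := Iff.rfl

theorem sr_mem_dihSub {N : ℕ} (A : AddSubgroup (ZMod N)) (o : Option (ZMod N ⧸ A)) (i : ZMod N) :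
    sr i ∈ dihSub A o ↔ some (QuotientAddGroup.mk i : ZMod N ⧸ A) = o := Iff.rfl

theorem dihSub_bijective (N : ℕ) : Function.Bijective
    (fun p : (Σ A : AddSubgroup (ZMod N), Option (ZMod N ⧸ A)) => dihSub p.1 p.2) := by
  constructor
  · rintro ⟨A, o⟩ ⟨B, o'⟩ h
    dsimp only at h
    have hAB : A = B := by
      ext i
      rw [← r_mem_dihSub A o, h, r_mem_dihSub]
    subst hAB
    congr 1
    have key : ∀ j, some (QuotientAddGroup.mk j : ZMod N ⧸ A) = o ↔
        some (QuotientAddGroup.mk j : ZMod N ⧸ A) = o' := by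
      intro j
      rw [← sr_mem_dihSub, h, sr_mem_dihSub]
    rcases o with _ | c
    · rcases o' with _ | c'
      · rfl
      · induction c' using QuotientAddGroup.induction_on with
        | H j => exact ((key j).2 rfl).symm
    · induction c using QuotientAddGroup.induction_on with
      | H j => exact (key j).1 rfl
  · intro H
    let A : AddSubgroup (ZMod N) :=
      { carrier := {i | r i ∈ H}
        zero_mem' := by simp [H.one_mem]
        add_mem' := fun {a b} ha hb => by simpa using H.mul_mem ha hb
        neg_mem' := fun {a} ha => by simpa using H.inv_mem ha }
    have hA : ∀ i, i ∈ A ↔ r i ∈ H := fun i => Iff.rfl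
    by_cases hj : ∃ j, sr j ∈ H
    · obtain ⟨j, hj⟩ := hj
      refine ⟨⟨A, some (QuotientAddGroup.mk j)⟩, ?_⟩
      ext x
      rcases x with i | i
      · rfl
      · change some _ = some _ ↔ _
        rw [Option.some.injEq, QuotientAddGroup.eq, hA]
        constructor
        · intro h
          have := H.mul_mem hj (H.inv_mem h)
          simpa using this
        · intro h
          have := H.mul_mem h hj
          simpa [sub_eq_neg_add] using this
    · refine ⟨⟨A, none⟩, ?_⟩
      ext x
      rcases x with i | i
      · rfl
      · change some _ = none ↔ _
        push Not at hj
        simp [hj i]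

theorem addSubgroup_card_inj (N : ℕ) [NeZero N] (A B : AddSubgroup (ZMod N))
    (h : Nat.card A = Nat.card B) : A = B := by
  classical
  have key : ∀ C : AddSubgroup (ZMod N), ∀ x, x ∈ C ↔ Nat.card C • x = 0 := by
    intro C
    have h1 := IsAddCyclic.card_nsmul_eq_zero_le (α := ZMod N) (n := Nat.card C) Nat.card_pos
    have hs : (Finset.univ.filter (· ∈ C)) ⊆ Finset.univ.filter (fun x : ZMod N => Nat.card C • x = 0) := by
      intro x hx
      simp only [Finset.mem_filter, Finset.mem_univ, true_and] at hx ⊢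
      have := card_nsmul_eq_zero' (G := C) (x := ⟨x, hx⟩)
      exact congrArg Subtype.val this
    have := Finset.eq_of_subset_of_card_le hs (h1.trans (by
      rw [Nat.card_eq_fintype_card, Fintype.card_subtype]))
    intro x
    have := Finset.ext_iff.1 this x
    simpa using this
  ext x
  rw [key A, key B, h]

theorem sum_addSubgroup (m : ℕ) (f : ℕ → ℕ) [Fintype (AddSubgroup (ZMod (2 ^ m)))] :
    ∑ A : AddSubgroup (ZMod (2 ^ m)), f (Nat.card A) = ∑ k ∈ Finset.range (m + 1), f (2 ^ k) := by
  rw [← Nat.sum_divisors_prime_pow Nat.prime_two]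
  refine Finset.sum_bij (fun A _ => Nat.card A) ?_ ?_ ?_ ?_
  · intro A _
    rw [Nat.mem_divisors]
    refine ⟨?_, by positivity⟩
    simpa using A.card_addSubgroup_dvd_card
  · intro A _ B _ h
    exact addSubgroup_card_inj _ A B h
  · intro d hd
    rw [Nat.mem_divisors] at hd
    obtain ⟨e, he⟩ := hd.1
    refine ⟨AddSubgroup.zmultiples (e : ZMod (2 ^ m)), Finset.mem_univ _, ?_⟩
    have he0 : e ≠ 0 := by rintro rfl; simp at he
    rw [Nat.card_zmultiples, ZMod.addOrderOf_coe _ (by positivity), he, Nat.gcd_eq_right (Dvd.intro_left d rfl)]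
    exact Nat.mul_div_cancel _ (Nat.pos_of_ne_zero he0)
  · intros; rfl

theorem orderOf_r_eq {N : ℕ} (i : ZMod N) : orderOf (r i : DihedralGroup N) = addOrderOf i := by
  apply Nat.dvd_antisymm
  · rw [orderOf_dvd_iff_pow_eq_one, r_pow, ← r_zero, mul_comm, ← nsmul_eq_mul, addOrderOf_nsmul_eq_zero]
  · rw [addOrderOf_dvd_iff_nsmul_eq_zero]
    have := pow_orderOf_eq_one (r i)
    rw [r_pow, ← r_zero, mul_comm, ← nsmul_eq_mul] at this
    injection this

theorem exists_gen {N : ℕ} (A : AddSubgroup (ZMod N)) : ∃ i ∈ A, addOrderOf i = Nat.card A := by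
  obtain ⟨g, hg⟩ := IsAddCyclic.exists_generator (α := A)
  refine ⟨g, g.2, ?_⟩
  rw [← addOrderOf_eq_card_of_forall_mem_zmultiples hg, AddSubgroup.addOrderOf_coe]

theorem addOrderOf_dvd {N : ℕ} (A : AddSubgroup (ZMod N)) {i : ZMod N} (hi : i ∈ A) :
    addOrderOf i ∣ Nat.card A := by
  have := addOrderOf_dvd_natCard (⟨i, hi⟩ : A)
  rwa [← AddSubgroup.addOrderOf_coe] at this

theorem exp_none {N : ℕ} (A : AddSubgroup (ZMod N)) :
    Monoid.exponent (dihSub A none) = Nat.card A := by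
  apply Nat.dvd_antisymm
  · rw [Monoid.exponent_dvd]
    rintro ⟨i | i, h⟩
    · rw [← Subgroup.orderOf_coe, orderOf_r_eq]
      exact addOrderOf_dvd A h
    · exact absurd h (by simp [sr_mem_dihSub])
  · obtain ⟨i, hi, h⟩ := exists_gen A
    rw [← h, ← orderOf_r_eq]
    have := Monoid.order_dvd_exponent (⟨r i, hi⟩ : dihSub A none)
    rwa [← Subgroup.orderOf_coe] at this

theorem exp_some {N : ℕ} (A : AddSubgroup (ZMod N)) (c : ZMod N ⧸ A) :
    Monoid.exponent (dihSub A (some c)) = Nat.lcm (Nat.card A) 2 := by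
  apply Nat.dvd_antisymm
  · rw [Monoid.exponent_dvd]
    rintro ⟨i | i, h⟩
    · rw [← Subgroup.orderOf_coe, orderOf_r_eq]
      exact (addOrderOf_dvd A h).trans (Nat.dvd_lcm_left _ _)
    · rw [← Subgroup.orderOf_coe, orderOf_sr]
      exact Nat.dvd_lcm_right _ _
  · apply Nat.lcm_dvd
    · obtain ⟨i, hi, h⟩ := exists_gen A
      rw [← h, ← orderOf_r_eq]
      have := Monoid.order_dvd_exponent (⟨r i, hi⟩ : dihSub A (some c))
      rwa [← Subgroup.orderOf_coe] at this
    · induction c using QuotientAddGroup.induction_on with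
      | H j =>
      have := Monoid.order_dvd_exponent (⟨sr j, rfl⟩ : dihSub A (some (QuotientAddGroup.mk j)))
      rwa [← Subgroup.orderOf_coe, orderOf_sr] at this

theorem card_rot {N : ℕ} [NeZero N] (A : AddSubgroup (ZMod N)) (d : ℕ) :
    Nat.card {i : ZMod N // i ∈ A ∧ addOrderOf i = d} =
      if d ∣ Nat.card A then Nat.totient d else 0 := by
  classical
  split_ifs with h
  · rw [Nat.card_eq_fintype_card] at h
    rw [← IsAddCyclic.card_addOrderOf_eq_totient (α := A) h, ← Fintype.card_subtype,
      ← Nat.card_eq_fintype_card]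
    refine Nat.card_congr ((Equiv.subtypeSubtypeEquivSubtypeInter _ _).symm.trans
      (Equiv.subtypeEquivRight ?_))
    intro x
    rw [← AddSubgroup.addOrderOf_coe]
  · rw [Nat.card_eq_zero]
    left
    constructor
    rintro ⟨i, hi, rfl⟩
    exact h (addOrderOf_dvd A hi)

theorem card_coset {N : ℕ} [NeZero N] (A : AddSubgroup (ZMod N)) (c : ZMod N ⧸ A) :
    Nat.card {i : ZMod N // (QuotientAddGroup.mk i : ZMod N ⧸ A) = c} = Nat.card A := by
  induction c using QuotientAddGroup.induction_on with
  | H j =>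
  refine Nat.card_congr ((Equiv.addLeft (-j)).subtypeEquiv ?_)
  intro a
  rw [eq_comm, QuotientAddGroup.eq]
  rfl

/-- Elements of given order in `dihSub`. -/
theorem card_order {N : ℕ} [NeZero N] (A : AddSubgroup (ZMod N)) (o : Option (ZMod N ⧸ A)) (d : ℕ) :
    Nat.card {x : dihSub A o // orderOf x = d} =
      Nat.card {i : ZMod N // i ∈ A ∧ addOrderOf i = d} +
      Nat.card {i : ZMod N // some (QuotientAddGroup.mk i : ZMod N ⧸ A) = o ∧ 2 = d} := by
  rw [← Nat.card_sum]
  refine Nat.card_congr (Equiv.symm (Equiv.ofBijective (Sum.elim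
    (fun i => ⟨⟨r i.1, i.2.1⟩, ?_⟩) (fun i => ⟨⟨sr i.1, i.2.1⟩, ?_⟩)) ⟨?_, ?_⟩))
  · rw [← Subgroup.orderOf_coe, orderOf_r_eq]; exact i.2.2
  · rw [← Subgroup.orderOf_coe, orderOf_sr]; exact i.2.2
  · rintro (⟨i, hi⟩ | ⟨i, hi⟩) (⟨j, hj⟩ | ⟨j, hj⟩) h <;>
      have h' := congrArg (fun x => x.1.1) h <;> simp at h' ⊢ <;> exact h'
  · rintro ⟨⟨i | i, h1⟩, h2⟩
    · refine ⟨Sum.inl ⟨i, h1, ?_⟩, rfl⟩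
      rwa [← Subgroup.orderOf_coe, orderOf_r_eq] at h2
    · refine ⟨Sum.inr ⟨i, h1, ?_⟩, rfl⟩
      rwa [← Subgroup.orderOf_coe, orderOf_sr] at h2

theorem phi_none {N : ℕ} [NeZero N] (A : AddSubgroup (ZMod N)) :
    phiG (dihSub A none) = Nat.totient (Nat.card A) := by
  unfold phiG
  rw [exp_none, card_order, card_rot]
  simp

theorem phi_some {N : ℕ} [NeZero N] (A : AddSubgroup (ZMod N)) (c : ZMod N ⧸ A) :
    phiG (dihSub A (some c)) =
      (if Nat.lcm (Nat.card A) 2 ∣ Nat.card A then Nat.totient (Nat.lcm (Nat.card A) 2) else 0) +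
      (if 2 = Nat.lcm (Nat.card A) 2 then Nat.card A else 0) := by
  unfold phiG
  rw [exp_some, card_order, card_rot]
  congr 1
  split_ifs with h
  · rw [← h]
    simpa using card_coset A c
  · simp [h]

theorem sum_closed (m : ℕ) (f : ℕ → ℕ) (h0 : f 0 = 1 + 2 ^ (m + 2)) (h1 : f 1 = 1 + 2 ^ (m + 1) * 3)
    (hf : ∀ k < m + 1, f (k + 2) = 2 ^ (k + 1) + 2 ^ (m + 1)) (j : ℕ) (hj : j ≤ m + 1) :
    ∑ k ∈ Finset.range (j + 2), f k = 2 ^ (m + 2) + 2 ^ (m + 1) * 3 + 2 ^ (j + 1) + j * 2 ^ (m + 1) := by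
  induction j with
  | zero => simp [Finset.sum_range_succ, h0, h1]; ring
  | succ j ih => rw [Finset.sum_range_succ, ih (by omega), hf j (by omega)]; ring

theorem stmt_8 (n : ℕ) (hn : 3 ≤ n) :
    SG (DihedralGroup (2 ^ (n - 1))) = 2 ^ (n + 1) + (n - 3) * 2 ^ (n - 2) := by
  classical
  obtain ⟨m, rfl⟩ : ∃ m, n = m + 3 := ⟨n - 3, by omega⟩
  have e1 : m + 3 - 1 = m + 2 := rfl
  have e2 : m + 3 - 2 = m + 1 := rfl
  rw [e1, e2, Nat.add_sub_cancel]
  unfold SG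
  let g : ℕ → ℕ := fun a => (if Nat.lcm a 2 ∣ a then Nat.totient (Nat.lcm a 2) else 0) +
      (if 2 = Nat.lcm a 2 then a else 0)
  let f : ℕ → ℕ := fun a => Nat.totient a + 2 ^ (m + 2) / a * g a
  have : Fintype (AddSubgroup (ZMod (2 ^ (m + 2)))) := Fintype.ofFinite _
  have : ∀ A : AddSubgroup (ZMod (2 ^ (m + 2))), Fintype (ZMod (2 ^ (m + 2)) ⧸ A) :=
    fun A => Fintype.ofFinite _
  rw [← finsum_comp _ (dihSub_bijective (2 ^ (m + 2))), finsum_eq_sum_of_fintype,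
    Fintype.sum_sigma]
  have hA : ∀ A : AddSubgroup (ZMod (2 ^ (m + 2))),
      ∑ o : Option (ZMod (2 ^ (m + 2)) ⧸ A), phiG (dihSub A o) = f (Nat.card A) := by
    intro A
    rw [Fintype.sum_option, phi_none]
    simp_rw [phi_some]
    rw [Finset.sum_const, Finset.card_univ, smul_eq_mul, ← Nat.card_eq_fintype_card]
    have := A.card_eq_card_quotient_mul_card_addSubgroup
    rw [Nat.card_zmod] at this
    simp only [f, g]
    rw [Nat.div_eq_of_eq_mul_left Nat.card_pos this]
  simp only [hA]
  rw [sum_addSubgroup, sum_closed m (fun k => f (2 ^ k)) _ _ _ (m + 1) le_rfl]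
  · ring
  · simp [f, g]
  · have : 2 ^ (m + 2) / 2 = 2 ^ (m + 1) := by rw [pow_succ]; simp
    simp [f, g, this]
  · intro k hk
    have hl : Nat.lcm (2 ^ (k + 2)) 2 = 2 ^ (k + 2) :=
      Nat.lcm_eq_left (dvd_pow_self 2 (by omega))
    have hne : 2 ≠ 2 ^ (k + 2) := by
      have : 0 < 2 ^ k := by positivity
      rw [pow_add]; omega
    have ht : Nat.totient (2 ^ (k + 2)) = 2 ^ (k + 1) := by
      rw [Nat.totient_prime_pow Nat.prime_two (by omega)]; simp
    simp only [f, g, hl, ht, dvd_refl, if_true, if_neg hne, add_zero]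
    rw [Nat.pow_div (by omega) (by norm_num), ← pow_add]
    congr 2
    omega
end

section
/- For every $n \geq 3$, the generalized quaternion group $Q_{2^n}$ of order $2^n$ satisfies $S(Q_{2^n}) = (n+4) \cdot 2^{n-2}$. -/
open QuaternionGroup

namespace QS

variable {N d : ℕ}

/-- reduction map -/
abbrev pr (h : d ∣ 2 * N) : ZMod (2 * N) →+* ZMod d := ZMod.castHom h (ZMod d)

/-- cyclic subgroup of the rotation part -/
def A (h : d ∣ 2 * N) : Subgroup (QuaternionGroup N) where
  carrier := {g | match g with
    | a i => pr h i = 0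
    | xa _ => False}
  mul_mem' := by
    rintro (i | i) (j | j) hi hj
    · simp only [Set.mem_ofPred_eq, a_mul_a, map_add] at *
      rw [hi, hj, add_zero]
    · exact hj.elim
    · exact hi.elim
    · exact hi.elim
  one_mem' := by
    change pr h 0 = 0
    exact map_zero _
  inv_mem' := by
    rintro (i | i) hi
    · change pr h (-i) = 0
      rw [map_neg, neg_eq_zero]
      exact hi
    · exact hi.elim

theorem pr_N (h : d ∣ 2 * N) (h' : d ∣ N) : pr h (N : ZMod (2 * N)) = 0 := by
  rw [map_natCast]
  exact (ZMod.natCast_eq_zero_iff _ _).2 h'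

/-- the dicyclic-type subgroup -/
def B (h : d ∣ 2 * N) (h' : d ∣ N) (r : ZMod d) : Subgroup (QuaternionGroup N) where
  carrier := {g | match g with
    | a i => pr h i = 0
    | xa i => pr h i = r}
  mul_mem' := by
    rintro (i | i) (j | j) hi hj <;>
    simp only [Set.mem_ofPred_eq, a_mul_a, a_mul_xa, xa_mul_a, xa_mul_xa, map_add, map_sub,
      pr_N h h'] at * <;> rw [hi, hj] <;> simp
  one_mem' := by
    change pr h 0 = 0
    exact map_zero _
  inv_mem' := by
    rintro (i | i) hi
    · change pr h (-i) = 0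
      rw [map_neg, neg_eq_zero]
      exact hi
    · change pr h (N + i) = r
      rw [map_add, pr_N h h', zero_add]
      exact hi

theorem a_mem_A (h : d ∣ 2 * N) (i : ZMod (2 * N)) :
    (a i ∈ A h) ↔ pr h i = 0 := Iff.rfl
theorem xa_mem_A (h : d ∣ 2 * N) (i : ZMod (2 * N)) :
    (xa i ∈ A h) ↔ False := Iff.rfl
theorem a_mem_B (h : d ∣ 2 * N) (h' : d ∣ N) (r : ZMod d) (i : ZMod (2 * N)) :
    (a i ∈ B h h' r) ↔ pr h i = 0 := Iff.rfl
theorem xa_mem_B (h : d ∣ 2 * N) (h' : d ∣ N) (r : ZMod d) (i : ZMod (2 * N)) :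
    (xa i ∈ B h h' r) ↔ pr h i = r := Iff.rfl

theorem pr_nat (h : d ∣ 2 * N) (v : ℕ) : pr h (v : ZMod (2 * N)) = 0 ↔ d ∣ v := by
  rw [map_natCast]
  exact ZMod.natCast_eq_zero_iff _ _

theorem pr_int (h : d ∣ 2 * N) (v : ℤ) : pr h (v : ZMod (2 * N)) = 0 ↔ (d : ℤ) ∣ v := by
  rw [map_intCast]
  exact ZMod.intCast_zmod_eq_zero_iff_dvd _ _

theorem a_pow (i : ZMod (2 * N)) (k : ℕ) : (a i) ^ k = a ((k : ZMod (2 * N)) * i) := by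
  induction k with
  | zero => simp
  | succ k ih => rw [pow_succ, ih, a_mul_a]; congr 1; push_cast; ring

theorem ord_a [NeZero N] {e : ℕ} (h : d ∣ 2 * N) (he : e * d = 2 * N) (i : ZMod (2 * N)) :
    orderOf (a i) ∣ e ↔ pr h i = 0 := by
  obtain ⟨v, rfl⟩ : ∃ v : ℕ, (v : ZMod (2 * N)) = i := ⟨i.val, ZMod.natCast_zmod_val i⟩
  rw [pr_nat, orderOf_dvd_iff_pow_eq_one, a_pow, one_def]
  have : (a ((e : ZMod (2 * N)) * (v : ZMod (2 * N))) = a 0) ↔ ((e * v : ℕ) : ZMod (2 * N)) = 0 := by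
    push_cast
    exact ⟨fun h => a.inj h, fun h => by rw [h]⟩
  have hN : 0 < 2 * N := NeZero.pos _
  rw [this, ZMod.natCast_eq_zero_iff, ← he]
  exact Nat.mul_dvd_mul_iff_left (Nat.pos_of_mul_pos_right (he ▸ hN))

/-- Any subgroup is one of the standard ones. -/
theorem classify [NeZero N] (H : Subgroup (QuaternionGroup N)) :
    ∃ (d : ℕ) (h : d ∣ 2 * N), H = A h ∨ ∃ (h' : d ∣ N) (r : ZMod d), H = B h h' r := by
  let S : AddSubgroup ℤ :=
    { carrier := {v | a (v : ZMod (2 * N)) ∈ H}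
      add_mem' := by
        intro x y hx hy
        have := H.mul_mem hx hy
        simpa using this
      zero_mem' := by
        simpa using H.one_mem
      neg_mem' := by
        intro x hx
        have := H.inv_mem hx
        change a (-(x : ZMod (2 * N))) ∈ H at this
        simpa using this }
  have hS : ∀ v : ℤ, v ∈ S ↔ a (v : ZMod (2 * N)) ∈ H := fun v => Iff.rfl
  obtain ⟨g, hg⟩ := Int.subgroup_cyclic S
  rw [← AddSubgroup.zmultiples_eq_closure] at hg
  have hS2 : ∀ v : ℤ, a (v : ZMod (2 * N)) ∈ H ↔ ((g.natAbs : ℕ) : ℤ) ∣ v := by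
    intro v
    rw [← hS, hg, Int.mem_zmultiples_iff, Int.natAbs_dvd]
  have h : g.natAbs ∣ 2 * N := by
    have := (hS2 ((2 * N : ℕ) : ℤ)).1 (by
      rw [Int.cast_natCast, ZMod.natCast_self]; exact H.one_mem)
    exact_mod_cast this
  have hS3 : ∀ i : ZMod (2 * N), a i ∈ H ↔ pr h i = 0 := by
    intro i
    obtain ⟨v, rfl⟩ := ZMod.intCast_surjective i
    rw [hS2, pr_int]
  refine ⟨g.natAbs, h, ?_⟩
  by_cases hx : ∃ i, xa i ∈ H
  · right
    obtain ⟨i, hi⟩ := hx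
    have h' : g.natAbs ∣ N := by
      rw [← pr_nat h, ← hS3, ← xa_sq i]
      exact H.pow_mem hi 2
    refine ⟨h', pr h i, ?_⟩
    ext (j | j)
    · rw [hS3, a_mem_B]
    · rw [xa_mem_B]
      have : xa j = xa i * a (j - i) := by simp
      rw [this, H.mul_mem_cancel_left hi, hS3, map_sub, sub_eq_zero]
  · left
    ext (j | j)
    · rw [hS3, a_mem_A]
    · rw [xa_mem_A, iff_false]
      exact fun hj => hx ⟨j, hj⟩

theorem fiber [NeZero N] (h : d ∣ 2 * N) (e : ℕ) (he : e * d = 2 * N) (r : ZMod d) :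
    Nat.card {i : ZMod (2 * N) // pr h i = r} = e := by
  classical
  have hN : 0 < 2 * N := NeZero.pos _
  have hd : 0 < d := Nat.pos_of_mul_pos_left (he ▸ hN)
  have : NeZero d := ⟨hd.ne'⟩
  have hsurj : Function.Surjective (pr h) := ZMod.ringHom_surjective _
  have key : ∀ s : ZMod d, Nat.card {i : ZMod (2 * N) // pr h i = s} =
      Nat.card {i : ZMod (2 * N) // pr h i = r} := by
    intro s
    obtain ⟨t, ht⟩ := hsurj (r - s)
    refine Nat.card_congr ((Equiv.addRight t).subtypeEquiv ?_)
    intro i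
    simp only [Equiv.coe_addRight, map_add, ht]
    constructor
    · rintro rfl; ring
    · intro h; linear_combination h
  have tot : Nat.card (Σ s : ZMod d, {i : ZMod (2 * N) // pr h i = s}) = 2 * N := by
    rw [Nat.card_congr (Equiv.sigmaFiberEquiv (pr h)), Nat.card_zmod]
  rw [Nat.card_sigma, Finset.sum_congr rfl (fun s _ => key s)] at tot
  simp only [Finset.sum_const, Finset.card_univ, ZMod.card, smul_eq_mul] at tot
  exact Nat.eq_of_mul_eq_mul_right hd ((mul_comm _ _).trans (tot.trans he.symm))

theorem phi_eq [NeZero N] (H : Subgroup (QuaternionGroup N)) (e : ℕ)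
    (he : Monoid.exponent H = e) :
    phiG H = Nat.card {i : ZMod (2 * N) // a i ∈ H ∧ orderOf (a i) = e} +
      Nat.card {i : ZMod (2 * N) // xa i ∈ H ∧ 4 = e} := by
  unfold phiG
  rw [he, ← Nat.card_sum]
  refine Nat.card_congr ⟨?_, ?_, ?_, ?_⟩
  · rintro ⟨⟨g | g, hg⟩, hgo⟩
    · exact Sum.inl ⟨g, hg, by rw [← hgo, Subgroup.orderOf_mk]⟩
    · exact Sum.inr ⟨g, hg, by rw [← hgo, Subgroup.orderOf_mk, orderOf_xa]⟩
  · rintro (⟨i, h1, h2⟩ | ⟨i, h1, h2⟩)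
    · exact ⟨⟨a i, h1⟩, by rw [Subgroup.orderOf_mk, h2]⟩
    · exact ⟨⟨xa i, h1⟩, by rw [Subgroup.orderOf_mk, orderOf_xa, h2]⟩
  · rintro ⟨⟨g | g, hg⟩, hgo⟩ <;> rfl
  · rintro (⟨i, h1, h2⟩ | ⟨i, h1, h2⟩) <;> rfl

theorem exp_dvd (H : Subgroup (QuaternionGroup N)) (e : ℕ) :
    Monoid.exponent H ∣ e ↔ ∀ g ∈ H, orderOf g ∣ e := by
  rw [Monoid.exponent_dvd]
  constructor
  · intro h g hg
    have := h ⟨g, hg⟩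
    rwa [Subgroup.orderOf_mk] at this
  · rintro h ⟨g, hg⟩
    rw [Subgroup.orderOf_mk]
    exact h g hg

theorem ord_gen [NeZero N] {e : ℕ} (he : e * d = 2 * N) :
    orderOf (a (d : ZMod (2 * N))) = e := by
  have hN : 0 < 2 * N := NeZero.pos _
  have hd : 0 < d := Nat.pos_of_mul_pos_left (he ▸ hN)
  rw [← a_one_pow, orderOf_pow, orderOf_a_one, ← he, Nat.gcd_eq_right (Dvd.intro_left _ rfl),
    Nat.mul_div_cancel _ hd]

theorem exp_A [NeZero N] (h : d ∣ 2 * N) (e : ℕ) (he : e * d = 2 * N) :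
    Monoid.exponent (A h) = e := by
  apply Nat.dvd_antisymm
  · rw [exp_dvd]
    rintro (i | i) hi
    · rwa [ord_a h he]
    · exact hi.elim
  · have := (exp_dvd (A h) _).1 dvd_rfl (a (d : ZMod (2 * N))) (by rw [a_mem_A, pr_nat])
    rwa [ord_gen he] at this

theorem exp_B [NeZero N] (h : d ∣ 2 * N) (h' : d ∣ N) (r : ZMod d) (e : ℕ)
    (he : e * d = 2 * N) :
    Monoid.exponent (B h h' r) = Nat.lcm e 4 := by
  apply Nat.dvd_antisymm
  · rw [exp_dvd]
    rintro (i | i) hi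
    · exact ((ord_a h he _).2 hi).trans (Nat.dvd_lcm_left _ _)
    · rw [orderOf_xa]; exact Nat.dvd_lcm_right _ _
  · have h1 := (exp_dvd (B h h' r) _).1 dvd_rfl (a (d : ZMod (2 * N))) (by rw [a_mem_B, pr_nat])
    rw [ord_gen he] at h1
    obtain ⟨i, hi⟩ := ZMod.ringHom_surjective (pr h) r
    have h2 := (exp_dvd (B h h' r) _).1 dvd_rfl (xa i) hi
    rw [orderOf_xa] at h2
    exact Nat.lcm_dvd h1 h2

/-- number of rotations of maximal order -/
theorem count_a {K j : ℕ} (hj : j ≤ K) (h : 2 ^ j ∣ 2 * 2 ^ K) :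
    Nat.card {i : ZMod (2 * 2 ^ K) // pr h i = 0 ∧ orderOf (a i) = 2 ^ (K + 1 - j)} =
      2 ^ (K - j) := by
  classical
  have e1 : 2 ^ (K + 1 - j) * 2 ^ j = 2 * 2 ^ K := by
    rw [← pow_add, ← pow_succ']; congr 1; omega
  have e2 : 2 ^ (K - j) * 2 ^ (j + 1) = 2 * 2 ^ K := by
    rw [← pow_add, ← pow_succ']; congr 1; omega
  have h2 : 2 ^ (j + 1) ∣ 2 * 2 ^ K := Dvd.intro_left _ e2
  have c1 := fiber h _ e1 0
  have c2 := fiber h2 _ e2 0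
  have key : ∀ i : ZMod (2 * 2 ^ K), (pr h i = 0 ∧ orderOf (a i) = 2 ^ (K + 1 - j)) ↔
      (pr h i = 0 ∧ ¬ pr h2 i = 0) := by
    intro i
    rw [← ord_a h e1, ← ord_a h2 e2]
    have : K + 1 - j = (K - j) + 1 := by omega
    rw [this]
    constructor
    · rintro ⟨h1, h2⟩
      refine ⟨h1, ?_⟩
      rw [h2, Nat.pow_dvd_pow_iff_le_right (by norm_num)]
      omega
    · rintro ⟨h1, h2⟩
      refine ⟨h1, ?_⟩
      obtain ⟨k, hk, hk'⟩ := (Nat.dvd_prime_pow Nat.prime_two).1 h1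
      rw [hk'] at h2 ⊢
      rw [Nat.pow_dvd_pow_iff_le_right (by norm_num)] at h2
      congr 1; omega
  have sub : ∀ i : ZMod (2 * 2 ^ K), pr h2 i = 0 → pr h i = 0 := by
    intro i hi
    rw [← ord_a h e1]
    rw [← ord_a h2 e2] at hi
    exact hi.trans (pow_dvd_pow _ (by omega))
  rw [Nat.card_congr (Equiv.subtypeEquivRight key)]
  rw [Nat.card_eq_fintype_card, Fintype.card_subtype] at *
  have := Finset.card_filter_add_card_filter_not (s := Finset.univ.filter fun i => pr h i = 0)
    (fun i => pr h2 i = 0)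
  rw [Finset.filter_filter, Finset.filter_filter, c1] at this
  have e3 : (Finset.univ.filter fun i => pr h i = 0 ∧ pr h2 i = 0) =
      Finset.univ.filter fun i => pr h2 i = 0 := by
    ext i
    simp only [Finset.mem_filter, Finset.mem_univ, true_and]
    exact ⟨fun h => h.2, fun h => ⟨sub i h, h⟩⟩
  rw [e3, c2] at this
  have e4 : K + 1 - j = (K - j) + 1 := by omega
  have e5 : 2 ^ (K + 1 - j) = 2 ^ (K - j) * 2 := by rw [e4, pow_succ]
  omega

theorem phi_A {K j : ℕ} (hj : j ≤ K) (h : 2 ^ j ∣ 2 * 2 ^ K) : phiG (A h) = 2 ^ (K - j) := by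
  have e1 : 2 ^ (K + 1 - j) * 2 ^ j = 2 * 2 ^ K := by
    rw [← pow_add, ← pow_succ']; congr 1; omega
  rw [phi_eq _ _ (exp_A h _ e1)]
  simp only [a_mem_A, xa_mem_A, false_and]
  rw [count_a hj h]
  simp

theorem phi_A_last {K : ℕ} (h : 2 ^ (K + 1) ∣ 2 * 2 ^ K) : phiG (A h) = 1 := by
  have e1 : 1 * 2 ^ (K + 1) = 2 * 2 ^ K := by rw [one_mul, pow_succ']
  rw [phi_eq _ _ (exp_A h _ e1)]
  simp only [a_mem_A, xa_mem_A, false_and]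
  have : ∀ i : ZMod (2 * 2 ^ K), (pr h i = 0 ∧ orderOf (a i) = 1) ↔ pr h i = 0 := by
    intro i
    rw [← ord_a h e1, Nat.dvd_one, and_self]
  rw [Nat.card_congr (Equiv.subtypeEquivRight this), fiber h _ e1]
  simp

theorem phi_B_gen {K j : ℕ} (hj : j + 1 < K) (h : 2 ^ j ∣ 2 * 2 ^ K) (h' : 2 ^ j ∣ 2 ^ K)
    (r : ZMod (2 ^ j)) : phiG (B h h' r) = 2 ^ (K - j) := by
  have e1 : 2 ^ (K + 1 - j) * 2 ^ j = 2 * 2 ^ K := by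
    rw [← pow_add, ← pow_succ']; congr 1; omega
  have e2 : Nat.lcm (2 ^ (K + 1 - j)) 4 = 2 ^ (K + 1 - j) :=
    Nat.lcm_eq_left (pow_dvd_pow 2 (show 2 ≤ _ by omega))
  have e3 : ¬ (4 = 2 ^ (K + 1 - j)) := by
    intro h
    have := Nat.pow_right_injective le_rfl (show 2 ^ 2 = 2 ^ (K + 1 - j) from h)
    omega
  rw [phi_eq _ _ (exp_B h h' r _ e1), e2]
  simp only [a_mem_B, xa_mem_B, e3, and_false]
  rw [count_a (by omega) h]
  simp

theorem phi_B_eight {K : ℕ} (h : 2 ^ K ∣ 2 * 2 ^ (K + 1)) (h' : 2 ^ K ∣ 2 ^ (K + 1))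
    (r : ZMod (2 ^ K)) : phiG (B h h' r) = 6 := by
  have e1 : 4 * 2 ^ K = 2 * 2 ^ (K + 1) := by ring
  have e2 : Nat.lcm 4 4 = 4 := rfl
  rw [phi_eq _ _ (exp_B h h' r _ e1), e2]
  simp only [a_mem_B, xa_mem_B, and_true]
  have := count_a (K := K + 1) (j := K) (by omega) h
  rw [show K + 1 + 1 - K = 2 by omega, show K + 1 - K = 1 by omega,
    show 2 ^ 2 = 4 by rfl, pow_one] at this
  rw [fiber h _ e1, this]

theorem phi_B_four {K : ℕ} (h : 2 ^ K ∣ 2 * 2 ^ K) (h' : 2 ^ K ∣ 2 ^ K)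
    (r : ZMod (2 ^ K)) : phiG (B h h' r) = 2 := by
  have e1 : 2 * 2 ^ K = 2 * 2 ^ K := rfl
  have e2 : Nat.lcm 2 4 = 4 := rfl
  rw [phi_eq _ _ (exp_B h h' r _ e1), e2]
  simp only [a_mem_B, xa_mem_B, and_true]
  rw [fiber h _ e1]
  have : IsEmpty {i : ZMod (2 * 2 ^ K) // pr h i = 0 ∧ orderOf (a i) = 4} := by
    constructor
    rintro ⟨i, h1, h2⟩
    rw [← ord_a h e1, h2] at h1
    revert h1; decide
  rw [Nat.card_of_isEmpty]

theorem dA {K : ℕ} (j : Fin (K + 2)) : 2 ^ (j : ℕ) ∣ 2 * 2 ^ K := by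
  rw [← pow_succ']; exact pow_dvd_pow _ (by omega)
theorem dB {K : ℕ} (j : Fin (K + 1)) : 2 ^ (j : ℕ) ∣ 2 ^ K := pow_dvd_pow _ (by omega)
theorem dB2 {K : ℕ} (j : Fin (K + 1)) : 2 ^ (j : ℕ) ∣ 2 * 2 ^ K := (dB j).mul_left 2

/-- parametrisation of the subgroups -/
def F (K : ℕ) : (Fin (K + 2) ⊕ (Σ j : Fin (K + 1), ZMod (2 ^ (j : ℕ)))) →
    Subgroup (QuaternionGroup (2 ^ K))
  | Sum.inl j => A (dA j)
  | Sum.inr ⟨j, r⟩ => B (dB2 j) (dB j) r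

theorem pr_inj {d d' : ℕ} (h : d ∣ 2 * N) (h' : d' ∣ 2 * N)
    (H : ∀ i, pr h i = 0 ↔ pr h' i = 0) : d = d' := by
  apply Nat.dvd_antisymm
  · rw [← pr_nat h, H, pr_nat]
  · rw [← pr_nat h', ← H, pr_nat]

theorem F_bij (K : ℕ) : Function.Bijective (F K) := by
  constructor
  · rintro (j | ⟨j, r⟩) (k | ⟨k, s⟩) hjk
    · have := pr_inj (dA j) (dA k) (fun i => by
        rw [← a_mem_A, ← a_mem_A]; exact iff_of_eq (congrArg (a i ∈ ·) hjk))
      congr 1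
      exact Fin.ext (Nat.pow_right_injective le_rfl this)
    · exfalso
      obtain ⟨i, hi⟩ := ZMod.ringHom_surjective (pr (dB2 k)) s
      have : xa i ∈ F K (Sum.inr ⟨k, s⟩) := hi
      rw [← hjk] at this
      exact this
    · exfalso
      obtain ⟨i, hi⟩ := ZMod.ringHom_surjective (pr (dB2 j)) r
      have : xa i ∈ F K (Sum.inr ⟨j, r⟩) := hi
      rw [hjk] at this
      exact this
    · have := pr_inj (dB2 j) (dB2 k) (fun i => by
        rw [← a_mem_B _ (dB j) r, ← a_mem_B _ (dB k) s]
        exact iff_of_eq (congrArg (a i ∈ ·) hjk))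
      have : j = k := Fin.ext (Nat.pow_right_injective le_rfl this)
      subst this
      obtain ⟨i, hi⟩ := ZMod.ringHom_surjective (pr (dB2 j)) r
      have h2 : xa i ∈ F K (Sum.inr ⟨j, r⟩) := hi
      rw [hjk] at h2
      have h3 : pr (dB2 j) i = s := h2
      rw [← hi, h3]
  · intro H
    obtain ⟨d, h, hH⟩ := classify H
    obtain ⟨j, hj, rfl⟩ := (Nat.dvd_prime_pow Nat.prime_two).1 (pow_succ' 2 K ▸ h)
    rcases hH with rfl | ⟨h', r, rfl⟩
    · exact ⟨Sum.inl ⟨j, by omega⟩, rfl⟩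
    · have : j ≤ K := (Nat.pow_dvd_pow_iff_le_right (by norm_num)).1 h'
      exact ⟨Sum.inr ⟨⟨j, by omega⟩, r⟩, rfl⟩

theorem geom (K : ℕ) : ∑ j ∈ Finset.range (K + 1), 2 ^ (K - j) + 1 = 2 ^ (K + 1) := by
  have := Finset.sum_range_reflect (fun j => 2 ^ j) (K + 1)
  simp only [Nat.add_sub_cancel] at this
  rw [this]
  have := Nat.geomSum_eq (m := 2) le_rfl (K + 1)
  have := Nat.one_le_two_pow (n := K + 1)
  omega

theorem main (L : ℕ) :
    SG (QuaternionGroup (2 ^ (L + 1))) = (L + 7) * 2 ^ (L + 1) := by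
  unfold SG
  rw [← finsum_eq_of_bijective (F (L + 1)) (F_bij (L + 1)) (fun x => rfl),
    finsum_eq_sum_of_fintype, Fintype.sum_sum_type, Fintype.sum_sigma]
  have s1 : ∑ j : Fin (L + 1 + 2), phiG (F (L + 1) (Sum.inl j)) = 2 ^ (L + 2) := by
    rw [Fin.sum_univ_castSucc]
    have : ∀ j : Fin (L + 2), phiG (F (L + 1) (Sum.inl j.castSucc)) = 2 ^ (L + 1 - (j : ℕ)) :=
      fun j => phi_A (j := (j : ℕ)) (by have := j.2; omega) _
    rw [Finset.sum_congr rfl (fun j _ => this j)]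
    have h2 : phiG (F (L + 1) (Sum.inl (Fin.last (L + 2)))) = 1 := phi_A_last _
    rw [h2, Fin.sum_univ_eq_sum_range (fun j => 2 ^ (L + 1 - j)) (L + 2), geom]
  have s2 : ∑ j : Fin (L + 1 + 1), ∑ r : ZMod (2 ^ (j : ℕ)), phiG (F (L + 1) (Sum.inr ⟨j, r⟩)) =
      (L + 5) * 2 ^ (L + 1) := by
    rw [Fin.sum_univ_castSucc, Fin.sum_univ_castSucc]
    have t1 : ∀ j : Fin L, ∑ r : ZMod (2 ^ (j : ℕ)),
        phiG (F (L + 1) (Sum.inr ⟨j.castSucc.castSucc, r⟩)) = 2 ^ (L + 1) := by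
      intro j
      have : ∀ r : ZMod (2 ^ (j : ℕ)),
        phiG (F (L + 1) (Sum.inr ⟨j.castSucc.castSucc, r⟩)) = 2 ^ (L + 1 - (j : ℕ)) :=
        fun r => phi_B_gen (j := (j : ℕ)) (by have := j.2; omega) (dB2 j.castSucc.castSucc)
          (dB j.castSucc.castSucc) r
      rw [Finset.sum_congr rfl (fun r _ => this r)]
      simp only [Finset.sum_const, Finset.card_univ, ZMod.card, smul_eq_mul]
      rw [← pow_add]; congr 1; omega
    have t2 : ∑ r : ZMod (2 ^ L),
        phiG (F (L + 1) (Sum.inr ⟨(Fin.last L).castSucc, r⟩)) = 2 ^ L * 6 := by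
      refine (Finset.sum_congr rfl (fun r _ => (phi_B_eight _ (dB (Fin.last L).castSucc) r : _ = 6))).trans ?_
      simp only [Finset.sum_const, Finset.card_univ, ZMod.card, smul_eq_mul]
      rfl
    have t3 : ∑ r : ZMod (2 ^ (L + 1)),
        phiG (F (L + 1) (Sum.inr ⟨Fin.last (L + 1), r⟩)) = 2 ^ (L + 1) * 2 := by
      refine (Finset.sum_congr rfl (fun r _ => (phi_B_four _ (dB (Fin.last (L + 1))) r : _ = 2))).trans ?_
      simp only [Finset.sum_const, Finset.card_univ, ZMod.card, smul_eq_mul]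
      rfl
    refine (congrArg₂ (· + ·) (congrArg₂ (· + ·) (Finset.sum_congr rfl fun j _ => t1 j) t2) t3).trans ?_
    simp only [Finset.sum_const, Finset.card_univ, Fintype.card_fin, smul_eq_mul]
    ring
  rw [s1, s2]
  ring

end QS

theorem stmt_9 (n : ℕ) (hn : 3 ≤ n) :
    SG (QuaternionGroup (2 ^ (n - 2))) = (n + 4) * 2 ^ (n - 2) := by
  obtain ⟨L, rfl⟩ := Nat.exists_eq_add_of_le hn
  rw [show 3 + L - 2 = L + 1 by omega, QS.main]
  ring
end

section
/- For every $n \geq 4$, the quasi-dihedral (semidihedral) group $S_{2^n}$ of order $2^n$ satisfies $S(S_{2^n}) = (2n+9) \cdot 2^{n-3}$. -/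
structure QD (m : ℕ) {G : Type*} [Group G] (x y : G) : Prop where
  ox : orderOf x = 2 ^ (m + 3)
  yy : y * y = 1
  yx : ∀ a : ℤ, y * x ^ a = x ^ ((2 ^ (m + 2) - 1) * a) * y
  mem : ∀ g : G, ∃ a : ℤ, g = x ^ a ∨ g = x ^ a * y
  not : ∀ a : ℤ, x ^ a ≠ y

namespace QD

theorem dcongr {d X Y : ℤ} (h : d ∣ Y) (e : X = Y) : d ∣ X := e ▸ h

variable {m : ℕ} {G : Type*} [Group G] {x y : G}

theorem ofHyp {n : ℕ} (hn : n = m + 4) [Fintype G]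
    (hcard : Nat.card G = 2 ^ n)
    (hx : orderOf x = 2 ^ (n - 1)) (hy : y ^ 2 = 1)
    (hxy : y⁻¹ * x * y = x ^ (2 ^ (n - 2) - 1))
    (hgen : Subgroup.closure {x, y} = ⊤) : QD m x y := by
  subst hn
  have e1 : m + 4 - 1 = m + 3 := rfl
  have e2 : m + 4 - 2 = m + 2 := rfl
  rw [e1] at hx
  rw [e2] at hxy
  have yy : y * y = 1 := by rw [← pow_two, hy]
  have yi : y⁻¹ = y := inv_eq_of_mul_eq_one_left yy
  have hC : Nat.card (Subgroup.zpowers x) = 2 ^ (m + 3) := by rw [Nat.card_zpowers, hx]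
  have hyC : y ∉ Subgroup.zpowers x := by
    intro h
    have : Subgroup.closure {x, y} ≤ Subgroup.zpowers x := by
      rw [Subgroup.closure_le]
      rintro g (rfl | rfl)
      · exact Subgroup.mem_zpowers _
      · exact h
    rw [hgen, top_le_iff] at this
    rw [this, Subgroup.card_top, hcard] at hC
    have := Nat.pow_right_injective (le_refl 2) hC
    omega
  have hidx : (Subgroup.zpowers x).index = 2 := by
    have := Subgroup.card_mul_index (Subgroup.zpowers x)
    rw [hC, hcard, pow_succ 2 (m + 3)] at this
    exact Nat.eq_of_mul_eq_mul_left (by positivity) this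
  have h1 : y * x * y = x ^ ((2 : ℤ) ^ (m + 2) - 1) := by
    rw [yi] at hxy
    rw [hxy, ← zpow_natCast]
    congr 1
    have : 1 ≤ 2 ^ (m + 2) := Nat.one_le_two_pow
    push_cast [this]
    rfl
  refine ⟨hx, yy, fun a => ?_, fun g => ?_, fun a h => hyC ⟨a, h⟩⟩
  · rw [zpow_mul, ← h1]
    have := conj_zpow (i := a) (a := y) (b := x)
    rw [yi] at this
    rw [this]
    simp [mul_assoc, yy]
  · by_cases hg : g ∈ Subgroup.zpowers x
    · obtain ⟨a, rfl⟩ := hg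
      exact ⟨a, Or.inl rfl⟩
    · have : g * y ∈ Subgroup.zpowers x := by
        rw [Subgroup.mul_mem_iff_of_index_two hidx]
        tauto
      obtain ⟨a, ha⟩ := this
      refine ⟨a, Or.inr ?_⟩
      simp only at ha
      rw [ha, mul_assoc, yy, mul_one]

theorem xpow (h : QD m x y) (a : ℤ) : x ^ a = 1 ↔ (2 : ℤ) ^ (m + 3) ∣ a := by
  rw [← orderOf_dvd_iff_zpow_eq_one, h.ox]; push_cast; rfl

theorem mulyy (h : QD m x y) (a b : ℤ) :
    (x ^ a * y) * (x ^ b * y) = x ^ (a + (2 ^ (m + 2) - 1) * b) := by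
  rw [mul_assoc, ← mul_assoc y, h.yx, mul_assoc, h.yy, mul_one, zpow_add]

theorem mulxy (a b : ℤ) : x ^ a * (x ^ b * y) = x ^ (a + b) * y := by
  rw [zpow_add, mul_assoc]

theorem mulyx (h : QD m x y) (a b : ℤ) :
    (x ^ a * y) * x ^ b = x ^ (a + (2 ^ (m + 2) - 1) * b) * y := by
  rw [mul_assoc, h.yx, zpow_add, mul_assoc]

theorem ne (h : QD m x y) (a b : ℤ) : x ^ a ≠ x ^ b * y := by
  intro hh
  apply h.not (a - b)
  rw [sub_eq_neg_add, zpow_add, hh]; simp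

/-- explicit description -/
def P (x y : G) (j : ℕ) (i : ℕ) (g : G) : Prop :=
  ∃ a : ℤ, (g = x ^ a ∧ (2 : ℤ) ^ j ∣ a) ∨ (g = x ^ a * y ∧ (2 : ℤ) ^ j ∣ a - i)

def B (x y : G) (j i : ℕ) : Subgroup G := Subgroup.closure {g | P x y j i g}
def A (x : G) (j : ℕ) : Subgroup G := Subgroup.zpowers (x ^ (2 ^ j))

theorem mem_A (h : QD m x y) {j : ℕ} (hj : j ≤ m + 3) (a : ℤ) :
    x ^ a ∈ A x j ↔ (2 : ℤ) ^ j ∣ a := by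
  constructor
  · rintro ⟨k, hk⟩
    simp only at hk
    rw [← zpow_natCast, ← zpow_mul, eq_comm, ← mul_inv_eq_one, ← zpow_neg, ← zpow_add,
      h.xpow] at hk
    have h2 := (pow_dvd_pow (2 : ℤ) hj).trans hk
    push_cast at h2
    have := dvd_add h2 (Dvd.intro k (rfl : (2 : ℤ) ^ j * k = _))
    simpa using this
  · rintro ⟨k, rfl⟩
    refine ⟨k, ?_⟩
    simp only
    rw [← zpow_natCast, ← zpow_mul]; push_cast; rfl

theorem mem_A' (h : QD m x y) {j : ℕ} (hj : j ≤ m + 3) (g : G) :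
    g ∈ A x j ↔ ∃ a : ℤ, g = x ^ a ∧ (2 : ℤ) ^ j ∣ a := by
  constructor
  · intro hg
    have := hg
    obtain ⟨k, hk⟩ := this
    simp only at hk
    rw [← zpow_natCast, ← zpow_mul] at hk
    refine ⟨_, hk.symm, ?_⟩
    rw [← h.mem_A hj, hk]; exact hg
  · rintro ⟨a, rfl, ha⟩
    exact (h.mem_A hj a).2 ha

theorem mem_B (h : QD m x y) {j i : ℕ} (hji : (2 : ℤ) ^ j ∣ 2 ^ (m + 2) * i) (g : G) :
    g ∈ B x y j i ↔ P x y j i g := by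
  have key : ∀ a : ℤ, (2 : ℤ) ^ j ∣ a - i → (2 : ℤ) ^ j ∣ 2 ^ (m + 2) * a := by
    intro a ha
    have := dvd_add (Dvd.dvd.mul_left ha (2 ^ (m + 2))) hji
    exact dcongr this (by ring)
  refine ⟨fun hg => ?_, fun hg => Subgroup.subset_closure hg⟩
  refine Subgroup.closure_induction (p := fun g _ => P x y j i g) (fun _ h => h) ?_ ?_ ?_ hg
  · exact ⟨0, Or.inl (by simp)⟩
  · rintro g1 g2 - - ⟨a, (⟨rfl, ha⟩ | ⟨rfl, ha⟩)⟩ ⟨b, (⟨rfl, hb⟩ | ⟨rfl, hb⟩)⟩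
    · exact ⟨a + b, Or.inl ⟨(zpow_add _ _ _).symm, dvd_add ha hb⟩⟩
    · exact ⟨a + b, Or.inr ⟨mulxy _ _, by rw [add_sub_assoc]; exact dvd_add ha hb⟩⟩
    · refine ⟨_, Or.inr ⟨h.mulyx _ _, ?_⟩⟩
      have := dvd_add ha (Dvd.dvd.mul_left hb (2 ^ (m + 2) - 1))
      exact dcongr this (by ring)
    · refine ⟨_, Or.inl ⟨h.mulyy _ _, ?_⟩⟩
      have := dvd_add (dvd_sub ha hb) (key b hb)
      exact dcongr this (by ring)
  · rintro g - ⟨a, (⟨rfl, ha⟩ | ⟨rfl, ha⟩)⟩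
    · exact ⟨-a, Or.inl ⟨(zpow_neg _ _).symm, by simpa using ha⟩⟩
    · refine ⟨-((2 ^ (m + 2) - 1) * a), Or.inr ⟨?_, ?_⟩⟩
      · rw [inv_eq_iff_mul_eq_one, h.mulyy, h.xpow]
        refine Dvd.intro (a * (1 - 2 ^ (m + 1))) ?_
        ring
      · have := dvd_sub ha (key a ha)
        exact dcongr this (by ring)

theorem mem_Bx (h : QD m x y) {j i : ℕ} (hj : j ≤ m + 3)
    (hji : (2 : ℤ) ^ j ∣ 2 ^ (m + 2) * i) (a : ℤ) :
    x ^ a ∈ B x y j i ↔ (2 : ℤ) ^ j ∣ a := by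
  rw [h.mem_B hji, ← h.mem_A hj, h.mem_A' hj]
  constructor
  · rintro ⟨b, hb | hb⟩
    · exact ⟨b, hb⟩
    · exact (h.ne _ _ hb.1).elim
  · rintro ⟨b, hb⟩
    exact ⟨b, Or.inl hb⟩

theorem mem_By (h : QD m x y) {j i : ℕ} (hj : j ≤ m + 3)
    (hji : (2 : ℤ) ^ j ∣ 2 ^ (m + 2) * i) (a : ℤ) :
    x ^ a * y ∈ B x y j i ↔ (2 : ℤ) ^ j ∣ a - i := by
  have hi : x ^ (i : ℤ) * y ∈ B x y j i := (h.mem_B hji _).2 ⟨i, Or.inr ⟨rfl, by simp⟩⟩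
  rw [← h.mem_Bx hj hji, ← (B x y j i).mul_mem_cancel_right hi (y := x ^ (a - (i : ℤ))), mulxy, sub_add_cancel]

theorem classify (h : QD m x y) (H : Subgroup G) :
    ∃ j, j ≤ m + 3 ∧ (H = A x j ∨
      ∃ i : ℕ, i < 2 ^ j ∧ (2 : ℤ) ^ j ∣ 2 ^ (m + 2) * i ∧ H = B x y j i) := by
  obtain ⟨d, hd⟩ : ∃ d : ℕ, ∀ a : ℤ, x ^ a ∈ H ↔ (d : ℤ) ∣ a := by
    let K : AddSubgroup ℤ :=
      { carrier := {a | x ^ a ∈ H}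
        zero_mem' := by simp [H.one_mem]
        add_mem' := by
          intro a b ha hb
          simp only [Set.mem_ofPred_eq, zpow_add] at *
          exact H.mul_mem ha hb
        neg_mem' := by
          intro a ha
          simp only [Set.mem_ofPred_eq, zpow_neg] at *
          exact H.inv_mem ha }
    obtain ⟨g, hg⟩ := Int.subgroup_cyclic K
    refine ⟨g.natAbs, fun a => ?_⟩
    rw [Int.natAbs_dvd, ← Int.mem_zmultiples_iff, AddSubgroup.zmultiples_eq_closure, ← hg]
    rfl
  have hd2 : d ∣ 2 ^ (m + 3) := by
    have := (hd (2 ^ (m + 3))).1 (by rw [(h.xpow _).2 dvd_rfl]; exact H.one_mem)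
    exact_mod_cast this
  obtain ⟨j, hj, rfl⟩ := (Nat.dvd_prime_pow Nat.prime_two).1 hd2
  push_cast at hd
  refine ⟨j, hj, ?_⟩
  by_cases hb : ∃ b : ℤ, x ^ b * y ∈ H
  · right
    obtain ⟨b, hb⟩ := hb
    have hpos : (0 : ℤ) < 2 ^ j := by positivity
    have hi0 : 0 ≤ b % 2 ^ j := Int.emod_nonneg _ hpos.ne'
    have hi1 : b % 2 ^ j < 2 ^ j := Int.emod_lt_of_pos _ hpos
    have hib : (2 : ℤ) ^ j ∣ b - b % 2 ^ j := Int.dvd_self_sub_emod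
    have hMb : (2 : ℤ) ^ j ∣ 2 ^ (m + 2) * b := by
      rw [← hd]
      have := H.mul_mem hb hb
      rw [h.mulyy] at this
      convert this using 2; ring
    obtain ⟨i, hi⟩ := Int.eq_ofNat_of_zero_le hi0
    rw [hi] at hi1 hib
    have hji : (2 : ℤ) ^ j ∣ 2 ^ (m + 2) * i := by
      have := dvd_sub hMb (Dvd.dvd.mul_left hib (2 ^ (m + 2)))
      exact dcongr this (by ring)
    refine ⟨i, by exact_mod_cast hi1, hji, ?_⟩
    ext g
    obtain ⟨a, rfl | rfl⟩ := h.mem g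
    · rw [hd, h.mem_Bx hj hji]
    · rw [h.mem_By hj hji, ← sub_add_cancel a b, ← mulxy, H.mul_mem_cancel_right hb, hd,
        sub_add_cancel]
      rw [← dvd_add_left hib]; ring_nf
  · left
    ext g
    obtain ⟨a, rfl | rfl⟩ := h.mem g
    · rw [hd, h.mem_A hj]
    · refine ⟨fun hg => (hb ⟨_, hg⟩).elim, fun hg => ?_⟩
      obtain ⟨c, hc, -⟩ := (h.mem_A' hj _).1 hg
      exact (h.ne _ _ hc.symm).elim

theorem inj_aux {j k : ℕ}
    (hh : ∀ a : ℤ, (2 : ℤ) ^ j ∣ a ↔ (2 : ℤ) ^ k ∣ a) : j = k := by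
  have h1 := (hh (2 ^ j)).1 dvd_rfl
  have h2 := (hh (2 ^ k)).2 dvd_rfl
  have h1' : 2 ^ k ∣ 2 ^ j := by exact_mod_cast h1
  have h2' : 2 ^ j ∣ 2 ^ k := by exact_mod_cast h2
  exact Nat.pow_right_injective (le_refl 2) (Nat.dvd_antisymm h2' h1')

theorem A_inj (h : QD m x y) {j k : ℕ} (hj : j ≤ m + 3) (hk : k ≤ m + 3)
    (e : A x j = A x k) : j = k :=
  inj_aux fun a => by rw [← h.mem_A hj, ← h.mem_A hk, e]

theorem A_ne_B (h : QD m x y) {j k i : ℕ} (hj : j ≤ m + 3) (hk : k ≤ m + 3)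
    (hki : (2 : ℤ) ^ k ∣ 2 ^ (m + 2) * i) : A x j ≠ B x y k i := by
  intro e
  have : x ^ (i : ℤ) * y ∈ A x j := by rw [e, h.mem_By hk hki]; simp
  obtain ⟨c, hc, -⟩ := (h.mem_A' hj _).1 this
  exact (h.ne _ _ hc.symm).elim

theorem B_inj (h : QD m x y) {j k i l : ℕ} (hj : j ≤ m + 3) (hk : k ≤ m + 3)
    (hji : (2 : ℤ) ^ j ∣ 2 ^ (m + 2) * i) (hkl : (2 : ℤ) ^ k ∣ 2 ^ (m + 2) * l)
    (hi : i < 2 ^ j) (hl : l < 2 ^ k)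
    (e : B x y j i = B x y k l) : j = k ∧ i = l := by
  have : j = k := inj_aux fun a => by rw [← h.mem_Bx hj hji, ← h.mem_Bx hk hkl, e]
  subst this
  refine ⟨rfl, ?_⟩
  have h1 : x ^ (i : ℤ) * y ∈ B x y j l := by rw [← e, h.mem_By hk hji]; simp
  rw [h.mem_By hk hkl] at h1
  have h3 : l ≡ i [MOD 2 ^ j] := by
    rw [Nat.modEq_iff_dvd]; exact_mod_cast h1
  exact (Nat.ModEq.eq_of_lt_of_lt h3 hl hi).symm

theorem card_A (h : QD m x y) {j : ℕ} (hj : j ≤ m + 3) :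
    Nat.card (A x j) = 2 ^ (m + 3 - j) := by
  rw [A, Nat.card_zpowers, orderOf_pow_of_dvd (by positivity) (by rw [h.ox]; exact pow_dvd_pow 2 hj),
    h.ox, Nat.pow_div hj (by norm_num)]

theorem cnt_A [Finite G] (h : QD m x y) {j : ℕ} (hj : j ≤ m + 3) {d : ℕ}
    (hd : d ∣ 2 ^ (m + 3 - j)) :
    Set.ncard {g | g ∈ A x j ∧ orderOf g = d} = d.totient := by
  classical
  have : Fintype (A x j) := Fintype.ofFinite _
  have hc : IsCyclic (A x j) := by unfold A; infer_instance
  have h1 := IsCyclic.card_orderOf_eq_totient (α := A x j) (d := d) (by rwa [← Nat.card_eq_fintype_card, h.card_A hj])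
  rw [← h1, ← Set.ncard_coe_finset, ← Set.ncard_image_of_injective _ Subtype.val_injective]
  congr 1
  ext g
  simp [and_comm]

theorem cnt_A0 [Finite G] (h : QD m x y) {j : ℕ} (hj : j ≤ m + 3) {d : ℕ}
    (hd : ¬ d ∣ 2 ^ (m + 3 - j)) :
    Set.ncard {g | g ∈ A x j ∧ orderOf g = d} = 0 := by
  rw [Set.ncard_eq_zero]
  ext g
  simp only [Set.mem_ofPred_eq, Set.mem_empty_iff_false, iff_false, not_and]
  rintro hg rfl
  apply hd
  rw [← h.card_A hj]
  exact Subgroup.orderOf_dvd_natCard _ hg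

theorem phi_eq (H : Subgroup G) (e : ℕ) (hall : ∀ g ∈ H, g ^ e = 1)
    (hex : ∃ g ∈ H, orderOf g = e) : phiG H = Set.ncard {g | g ∈ H ∧ orderOf g = e} := by
  have : Monoid.exponent H = e := by
    apply Nat.dvd_antisymm
    · apply Monoid.exponent_dvd_of_forall_pow_eq_one
      rintro ⟨g, hg⟩
      ext
      exact hall g hg
    · obtain ⟨g, hg, rfl⟩ := hex
      have := Monoid.order_dvd_exponent (⟨g, hg⟩ : H)
      rwa [Subgroup.orderOf_mk] at this
  rw [phiG, this]
  change Nat.card {a : H | orderOf a = e} = _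
  rw [Nat.card_coe_set_eq, ← Set.ncard_image_of_injective _ Subtype.val_injective]
  congr 1
  ext g
  simp [and_comm]

theorem sq (h : QD m x y) (a : ℤ) : (x ^ a * y) ^ 2 = x ^ (2 ^ (m + 2) * a) := by
  rw [pow_two, h.mulyy]; congr 1; ring

theorem pow4 (h : QD m x y) (a : ℤ) : (x ^ a * y) ^ 4 = 1 := by
  rw [show 4 = 2 * 2 from rfl, pow_mul, h.sq, ← zpow_natCast, ← zpow_mul, h.xpow]
  exact ⟨a, by push_cast; ring⟩

theorem sq_iff (h : QD m x y) (a : ℤ) : (x ^ a * y) ^ 2 = 1 ↔ (2 : ℤ) ∣ a := by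
  rw [h.sq, h.xpow, pow_succ]
  exact mul_dvd_mul_iff_left (by positivity)

theorem ord2 (h : QD m x y) {a : ℤ} (ha : (2 : ℤ) ∣ a) : orderOf (x ^ a * y) = 2 := by
  apply orderOf_eq_prime ((h.sq_iff a).2 ha)
  intro hh
  exact h.ne 0 a (by simp [hh])

theorem ord4 (h : QD m x y) {a : ℤ} (ha : ¬ (2 : ℤ) ∣ a) : orderOf (x ^ a * y) = 4 := by
  have := orderOf_eq_prime_pow (x := x ^ a * y) (p := 2) (n := 1)
    (by rw [pow_one, h.sq_iff]; exact ha) (h.pow4 a)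
  simpa using this

theorem phi_A [Finite G] (h : QD m x y) {j : ℕ} (hj : j ≤ m + 3) :
    phiG (A x j) = (2 ^ (m + 3 - j)).totient := by
  rw [phi_eq (A x j) (2 ^ (m + 3 - j)), h.cnt_A hj dvd_rfl]
  · intro g hg
    rw [← orderOf_dvd_iff_pow_eq_one, ← h.card_A hj]
    exact Subgroup.orderOf_dvd_natCard _ hg
  · refine ⟨x ^ 2 ^ j, Subgroup.mem_zpowers _, ?_⟩
    rw [← h.card_A hj, A, Nat.card_zpowers]

/-- splitting the elements of a given order of `B`. -/
theorem cnt_B [Finite G] (h : QD m x y) {j i : ℕ} (hj : j ≤ m + 3)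
    (hji : (2 : ℤ) ^ j ∣ 2 ^ (m + 2) * i) (d : ℕ) :
    Set.ncard {g | g ∈ B x y j i ∧ orderOf g = d} =
      Set.ncard {g | g ∈ A x j ∧ orderOf g = d} +
      Set.ncard {g | (∃ a : ℤ, g = x ^ a * y ∧ (2 : ℤ) ^ j ∣ a - i) ∧ orderOf g = d} := by
  rw [← Set.ncard_union_eq]
  · congr 1
    ext g
    simp only [Set.mem_ofPred_eq, Set.mem_union, h.mem_B hji, h.mem_A' hj, P, exists_or]
    exact or_and_right
  · rw [Set.disjoint_left]
    rintro g ⟨h1, -⟩ ⟨⟨a, rfl, -⟩, -⟩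
    obtain ⟨c, hc, -⟩ := (h.mem_A' hj _).1 h1
    exact h.ne _ _ hc.symm

theorem cnt_out [Finite G] (h : QD m x y) {j i : ℕ} (hj : j ≤ m + 3) :
    Set.ncard {g | ∃ a : ℤ, g = x ^ a * y ∧ (2 : ℤ) ^ j ∣ a - i} = 2 ^ (m + 3 - j) := by
  rw [← h.card_A hj]
  change _ = Nat.card ((A x j : Set G))
  rw [Nat.card_coe_set_eq, ← Set.ncard_image_of_injective (A x j : Set G)
    (mul_left_injective (x ^ (i : ℤ) * y))]
  congr 1
  ext g
  simp only [Set.mem_ofPred_eq, Set.mem_image, SetLike.mem_coe, h.mem_A' hj]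
  constructor
  · rintro ⟨a, rfl, ha⟩
    exact ⟨x ^ (a - i), ⟨_, rfl, ha⟩, by rw [mulxy, sub_add_cancel]⟩
  · rintro ⟨_, ⟨a, rfl, ha⟩, rfl⟩
    exact ⟨a + i, mulxy _ _, by simpa using ha⟩

theorem cnt_out_all [Finite G] (h : QD m x y) {j i d : ℕ} (hj : j ≤ m + 3)
    (ho : ∀ a : ℤ, (2 : ℤ) ^ j ∣ a - i → orderOf (x ^ a * y) = d) :
    Set.ncard {g | (∃ a : ℤ, g = x ^ a * y ∧ (2 : ℤ) ^ j ∣ a - i) ∧ orderOf g = d} =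
      2 ^ (m + 3 - j) := by
  rw [← h.cnt_out (i := i) hj]
  congr 1
  ext g
  simp only [Set.mem_ofPred_eq, and_iff_left_iff_imp]
  rintro ⟨a, rfl, ha⟩
  exact ho a ha

theorem cnt_out_none {j i d : ℕ}
    (ho : ∀ a : ℤ, (2 : ℤ) ^ j ∣ a - i → orderOf (x ^ a * y) ≠ d) :
    Set.ncard {g | (∃ a : ℤ, g = x ^ a * y ∧ (2 : ℤ) ^ j ∣ a - i) ∧ orderOf g = d} = 0 := by
  convert Set.ncard_empty G
  ext g
  simp only [Set.mem_ofPred_eq, Set.mem_empty_iff_false, iff_false, not_and]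
  rintro ⟨a, rfl, ha⟩
  exact ho a ha

theorem par {j i : ℕ} (hj : 1 ≤ j) {a : ℤ} (ha : (2 : ℤ) ^ j ∣ a - i) :
    (2 : ℤ) ∣ a ↔ Even i := by
  have h2 : (2 : ℤ) ∣ a - i := (dvd_pow_self 2 (by omega)).trans ha
  rw [Nat.even_iff]; omega

/-- exponent description for `B`. -/
theorem phi_B [Finite G] (h : QD m x y) {j i : ℕ} (hj : j ≤ m + 3)
    (hji : (2 : ℤ) ^ j ∣ 2 ^ (m + 2) * i) (e : ℕ) (he : 2 ^ (m + 3 - j) ∣ e)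
    (ho : ∀ a : ℤ, (2 : ℤ) ^ j ∣ a - i → orderOf (x ^ a * y) ∣ e)
    (hex : e = 2 ^ (m + 3 - j) ∨ orderOf (x ^ (i : ℤ) * y) = e) :
    phiG (B x y j i) = Set.ncard {g | g ∈ A x j ∧ orderOf g = e} +
      Set.ncard {g | (∃ a : ℤ, g = x ^ a * y ∧ (2 : ℤ) ^ j ∣ a - i) ∧ orderOf g = e} := by
  rw [phi_eq (B x y j i) e, h.cnt_B hj hji]
  · intro g hg
    rw [← orderOf_dvd_iff_pow_eq_one]
    obtain ⟨a, ha | ⟨rfl, ha⟩⟩ := (h.mem_B hji _).1 hg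
    · refine Dvd.dvd.trans ?_ he
      rw [← h.card_A hj]
      exact Subgroup.orderOf_dvd_natCard _ ((h.mem_A' hj _).2 ⟨a, ha⟩)
    · exact ho a ha
  · rcases hex with rfl | hex
    · refine ⟨x ^ 2 ^ j, ?_, ?_⟩
      · rw [← zpow_natCast, h.mem_Bx hj hji]; simp
      · rw [← h.card_A hj, A, Nat.card_zpowers]
    · exact ⟨_, (h.mem_By hj hji _).2 (by simp), hex⟩

theorem ord_dvd4 (h : QD m x y) (a : ℤ) : orderOf (x ^ a * y) ∣ 4 :=
  orderOf_dvd_of_pow_eq_one (h.pow4 a)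

theorem phi_B0 [Finite G] (h : QD m x y) {j i : ℕ} (hj : j ≤ m) :
    phiG (B x y j i) = 2 ^ (m + 2 - j) := by
  have hji : (2 : ℤ) ^ j ∣ 2 ^ (m + 2) * i := Dvd.dvd.mul_right (pow_dvd_pow _ (by omega)) _
  have e1 : m + 3 - j = (m - j) + 3 := by omega
  have e2 : m + 2 - j = (m - j) + 2 := by omega
  rw [h.phi_B (by omega) hji (2 ^ (m + 3 - j)) dvd_rfl _ (Or.inl rfl),
    h.cnt_A (by omega) dvd_rfl, cnt_out_none, e1, e2, Nat.totient_prime_pow_succ Nat.prime_two]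
  · simp
  · intro a _ hh
    have := Nat.le_of_dvd (by norm_num) (h.ord_dvd4 a)
    rw [hh, e1, pow_succ, pow_succ, pow_succ] at this
    have : 1 ≤ 2 ^ (m - j) := Nat.one_le_two_pow
    omega
  · intro a _
    refine (h.ord_dvd4 a).trans ?_
    rw [e1, show 4 = 2 ^ 2 from rfl]
    exact pow_dvd_pow _ (by omega)

theorem phi_B1 [Finite G] (h : QD m x y) {i : ℕ} :
    phiG (B x y (m + 1) i) = if Even i then 2 else 6 := by
  have hji : (2 : ℤ) ^ (m + 1) ∣ 2 ^ (m + 2) * i := Dvd.dvd.mul_right (pow_dvd_pow _ (by omega)) _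
  have e1 : m + 3 - (m + 1) = 2 := by omega
  have t : Nat.totient 4 = 2 := by decide
  rw [h.phi_B (by omega) hji 4 (by rw [e1]; norm_num) (fun a _ => h.ord_dvd4 a)
    (Or.inl (by rw [e1]; norm_num)), h.cnt_A (by omega) (by rw [e1]; norm_num), t]
  split_ifs with hi
  · rw [cnt_out_none]
    intro a ha
    rw [h.ord2 ((par (by omega) ha).2 hi)]; norm_num
  · rw [h.cnt_out_all (by omega), e1]
    · norm_num
    intro a ha
    rw [h.ord4 (fun hh => hi ((par (by omega) ha).1 hh))]

theorem phi_B2 [Finite G] (h : QD m x y) {i : ℕ} :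
    phiG (B x y (m + 2) i) = if Even i then 3 else 2 := by
  have hji : (2 : ℤ) ^ (m + 2) ∣ 2 ^ (m + 2) * i := Dvd.intro _ rfl
  have e1 : m + 3 - (m + 2) = 1 := by omega
  split_ifs with hi
  · have ho : ∀ a : ℤ, (2 : ℤ) ^ (m + 2) ∣ a - i → orderOf (x ^ a * y) = 2 :=
      fun a ha => h.ord2 ((par (by omega) ha).2 hi)
    rw [h.phi_B (by omega) hji 2 (by rw [e1]; norm_num) (fun a ha => by rw [ho a ha])
      (Or.inl (by rw [e1]; norm_num)), h.cnt_A (by omega) (by rw [e1]; norm_num),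
      h.cnt_out_all (by omega) ho, e1]
    decide
  · have ho : ∀ a : ℤ, (2 : ℤ) ^ (m + 2) ∣ a - i → orderOf (x ^ a * y) = 4 :=
      fun a ha => h.ord4 (fun hh => hi ((par (by omega) ha).1 hh))
    rw [h.phi_B (by omega) hji 4 (by rw [e1]; norm_num) (fun a ha => by rw [ho a ha])
      (Or.inr (ho _ (by simp))), h.cnt_A0 (by omega) (by rw [e1]; norm_num),
      h.cnt_out_all (by omega) ho, e1]
    norm_num

theorem phi_B3 [Finite G] (h : QD m x y) {i : ℕ} (hi : Even i) :
    phiG (B x y (m + 3) i) = 1 := by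
  have hji : (2 : ℤ) ^ (m + 3) ∣ 2 ^ (m + 2) * i := by
    rw [pow_succ]
    exact mul_dvd_mul_left _ (by exact_mod_cast hi.two_dvd)
  have ho : ∀ a : ℤ, (2 : ℤ) ^ (m + 3) ∣ a - i → orderOf (x ^ a * y) = 2 :=
      fun a ha => h.ord2 ((par (by omega) ha).2 hi)
  rw [h.phi_B (by omega) hji 2 (by simp) (fun a ha => by rw [ho a ha])
      (Or.inr (ho _ (by simp))), h.cnt_A0 (by omega) (by simp),
      h.cnt_out_all (by omega) ho]
  simp

theorem hji_iff {j i : ℕ} (hj : j ≤ m + 3) :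
    (2 : ℤ) ^ j ∣ 2 ^ (m + 2) * i ↔ (j = m + 3 → Even i) := by
  rcases Nat.lt_or_ge j (m + 3) with h1 | h1
  · simp only [show j ≠ m + 3 by omega, false_imp_iff, iff_true]
    exact Dvd.dvd.mul_right (pow_dvd_pow _ (by omega)) _
  · obtain rfl : j = m + 3 := by omega
    rw [pow_succ, mul_dvd_mul_iff_left (by positivity), even_iff_two_dvd]
    simp only [forall_const]
    exact_mod_cast Iff.rfl

theorem sum_par (k a b : ℕ) :
    ∑ i ∈ Finset.range (2 ^ (k + 1)), (if Even i then a else b) = 2 ^ k * (a + b) := by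
  have : ∀ N, ∑ i ∈ Finset.range (N * 2), (if Even i then a else b) = N * (a + b) := by
    intro N
    induction N with
    | zero => simp
    | succ N ih =>
      rw [show (N + 1) * 2 = N * 2 + 1 + 1 by ring, Finset.sum_range_succ, Finset.sum_range_succ, ih]
      have h1 : Even (N * 2) := by simp
      have h2 : ¬ Even (N * 2 + 1) := by simp [Nat.even_add_one]
      rw [if_pos h1, if_neg h2]; ring
  rw [pow_succ, this]

theorem sum_A [Finite G] (h : QD m x y) :
    ∑ j ∈ Finset.range (m + 4), phiG (A x j) = 2 ^ (m + 3) := by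
  have h1 := Nat.sum_totient (2 ^ (m + 3))
  rw [Nat.divisors_prime_pow Nat.prime_two, Finset.sum_map] at h1
  rw [← h1, ← Finset.sum_range_reflect]
  apply Finset.sum_congr rfl
  intro j hj
  have := Finset.mem_range.1 hj
  rw [h.phi_A (by omega)]
  simp only [Function.Embedding.coeFn_mk]
  congr 2
  omega

theorem main [Finite G] (h : QD m x y) : SG G = (2 * m + 17) * 2 ^ (m + 1) := by
  classical
  have : Fintype (Subgroup G) := Fintype.ofFinite _
  let T : Finset (Σ _ : ℕ, ℕ) := (Finset.range (m + 4)).sigma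
    (fun j => (Finset.range (2 ^ j)).filter (fun i => j = m + 3 → Even i))
  have hT : ∀ p : (Σ _ : ℕ, ℕ), p ∈ T → p.1 ≤ m + 3 ∧ p.2 < 2 ^ p.1 ∧
      (2 : ℤ) ^ p.1 ∣ 2 ^ (m + 2) * p.2 := by
    intro p hp
    simp only [T, Finset.mem_sigma, Finset.mem_range, Finset.mem_filter] at hp
    have hp1 : p.1 ≤ m + 3 := by omega
    exact ⟨hp1, hp.2.1, (hji_iff hp1).2 hp.2.2⟩
  have huniv : (Finset.univ : Finset (Subgroup G)) =
      (Finset.range (m + 4)).image (A x) ∪ T.image (fun p => B x y p.1 p.2) := by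
    ext H
    simp only [Finset.mem_univ, true_iff, Finset.mem_union, Finset.mem_image, Finset.mem_range]
    obtain ⟨j, hj, rfl | ⟨i, hi, hji, rfl⟩⟩ := h.classify H
    · exact Or.inl ⟨j, by omega, rfl⟩
    · refine Or.inr ⟨⟨j, i⟩, ?_, rfl⟩
      simp only [T, Finset.mem_sigma, Finset.mem_range, Finset.mem_filter]
      exact ⟨by omega, hi, (hji_iff hj).1 hji⟩
  have hdisj : Disjoint ((Finset.range (m + 4)).image (A x)) (T.image (fun p => B x y p.1 p.2)) := by
    rw [Finset.disjoint_left]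
    intro H h1 h2
    obtain ⟨j, hj, rfl⟩ := Finset.mem_image.1 h1
    obtain ⟨p, hp, hpe⟩ := Finset.mem_image.1 h2
    have := Finset.mem_range.1 hj
    exact h.A_ne_B (by omega) (hT p hp).1 (hT p hp).2.2 hpe.symm
  rw [SG, finsum_eq_sum_of_fintype, huniv, Finset.sum_union hdisj, Finset.sum_image,
    Finset.sum_image, h.sum_A, Finset.sum_sigma, Finset.sum_range_succ, Finset.sum_range_succ,
    Finset.sum_range_succ]
  · have s0 : ∑ j ∈ Finset.range (m + 1),
        ∑ i ∈ (Finset.range (2 ^ j)).filter (fun i => j = m + 3 → Even i), phiG (B x y j i) =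
        (m + 1) * 2 ^ (m + 2) := by
      rw [Finset.sum_congr rfl (g := fun _ => 2 ^ (m + 2)), Finset.sum_const, Finset.card_range,
        smul_eq_mul]
      intro j hj
      have := Finset.mem_range.1 hj
      rw [Finset.filter_true_of_mem (fun _ _ hh => by omega),
        Finset.sum_congr rfl (fun i _ => h.phi_B0 (by omega)), Finset.sum_const, Finset.card_range,
        smul_eq_mul, ← pow_add]
      congr 1; omega
    have s1 : ∑ i ∈ (Finset.range (2 ^ (m + 1))).filter (fun i => m + 1 = m + 3 → Even i),
        phiG (B x y (m + 1) i) = 2 ^ m * 8 := by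
      rw [Finset.filter_true_of_mem (fun _ _ hh => by omega),
        Finset.sum_congr rfl (fun i _ => h.phi_B1), sum_par]
    have s2 : ∑ i ∈ (Finset.range (2 ^ (m + 2))).filter (fun i => m + 2 = m + 3 → Even i),
        phiG (B x y (m + 2) i) = 2 ^ (m + 1) * 5 := by
      rw [Finset.filter_true_of_mem (fun _ _ hh => by omega),
        Finset.sum_congr rfl (fun i _ => h.phi_B2), sum_par]
    have s3 : ∑ i ∈ (Finset.range (2 ^ (m + 3))).filter (fun i => m + 3 = m + 3 → Even i),
        phiG (B x y (m + 3) i) = 2 ^ (m + 2) := by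
      rw [Finset.sum_congr rfl (g := fun _ => 1)]
      · simp only [forall_const]
        rw [Finset.sum_filter, sum_par]; simp
      · intro i hi
        exact h.phi_B3 ((Finset.mem_filter.1 hi).2 rfl)
    dsimp only
    rw [s0, s1, s2, s3]
    ring
  · rintro ⟨j, i⟩ hp ⟨k, l⟩ hq e
    obtain ⟨a1, a2, a3⟩ := hT _ hp
    obtain ⟨b1, b2, b3⟩ := hT _ hq
    obtain ⟨rfl, rfl⟩ := h.B_inj a1 b1 a3 b3 a2 b2 e
    rfl
  · intro j hj k hk e
    have h1 := Finset.mem_range.1 hj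
    have h2 := Finset.mem_range.1 hk
    exact h.A_inj (by omega) (by omega) e

end QD

theorem stmt_10 (n : ℕ) (hn : 4 ≤ n) (G : Type*) [Group G] [Fintype G]
    (x y : G) (hcard : Nat.card G = 2 ^ n)
    (hx : orderOf x = 2 ^ (n - 1)) (hy : y ^ 2 = 1)
    (hxy : y⁻¹ * x * y = x ^ (2 ^ (n - 2) - 1))
    (hgen : Subgroup.closure {x, y} = ⊤) :
    SG G = (2 * n + 9) * 2 ^ (n - 3) := by
  obtain ⟨m, rfl⟩ : ∃ m, n = m + 4 := ⟨n - 4, by omega⟩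
  have h : QD m x y := QD.ofHyp rfl hcard hx hy hxy hgen
  rw [h.main]
  rfl
end

section
/- For every $n \geq 4$ and every prime $p$, the modular maximal-cyclic group $M(p^n) = \langle x, y \mid x^{p^{n-1}} = y^p = 1,\ y^{-1} x y = x^{p^{n-2}+1} \rangle$ of order $p^n$ satisfies $S(M(p^n)) > p^n$. -/
/-- The modular maximal-cyclic group `M(p^n)` is axiomatized by generators `x, y` with
`orderOf x = p ^ (n - 1)`, `y ^ p = 1`, `y⁻¹ * x * y = x ^ (p ^ (n - 2) + 1)`,
generating a group of order `p ^ n`. -/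
theorem stmt_11 (p : ℕ) (hp : p.Prime) (n : ℕ) (hn : 4 ≤ n)
    (G : Type*) [Group G] [Fintype G]
    (x y : G) (hcard : Nat.card G = p ^ n)
    (hx : orderOf x = p ^ (n - 1)) (hy : y ^ p = 1)
    (hxy : y⁻¹ * x * y = x ^ (p ^ (n - 2) + 1))
    (hgen : Subgroup.closure {x, y} = ⊤) :
    SG G > p ^ n := by
  classical
  haveI : Fact p.Prime := ⟨hp⟩
  have hSG : SG G = Nat.card (Σ H : Subgroup G, {a : H // orderOf a = Monoid.exponent H}) := by
    rw [Nat.card_sigma, SG, finsum_eq_sum_of_fintype]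
    rfl
  -- `G` is not cyclic since it is not abelian
  have hpos : 1 < p ^ (n - 2) := Nat.one_lt_pow (by omega) hp.one_lt
  have hlt : p ^ (n - 2) < p ^ (n - 1) := Nat.pow_lt_pow_right hp.one_lt (by omega)
  have hnc : ∀ g : G, Subgroup.zpowers g ≠ ⊤ := by
    intro g hg
    have hc : x * y = y * x := by
      have h1 : x ∈ Subgroup.zpowers g := hg ▸ Subgroup.mem_top x
      have h2 : y ∈ Subgroup.zpowers g := hg ▸ Subgroup.mem_top y
      obtain ⟨i, rfl⟩ := Subgroup.mem_zpowers_iff.1 h1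
      obtain ⟨j, rfl⟩ := Subgroup.mem_zpowers_iff.1 h2
      rw [← zpow_add, ← zpow_add, add_comm]
    rw [mul_assoc, hc, inv_mul_cancel_left, pow_succ] at hxy
    have h3 : x ^ p ^ (n - 2) = 1 := by
      have := hxy.symm
      rwa [mul_eq_right] at this
    have h4 := orderOf_dvd_of_pow_eq_one h3
    rw [hx] at h4
    exact absurd (Nat.le_of_dvd (by omega) h4) (by omega)
  -- the exponent of the whole group is attained
  obtain ⟨a, ha⟩ : ∃ a : (⊤ : Subgroup G), orderOf a = Monoid.exponent (⊤ : Subgroup G) := by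
    obtain ⟨a, ha⟩ := hp.exists_orderOf_eq_pow_factorization_exponent (⊤ : Subgroup G)
    refine ⟨a, ?_⟩
    have h5 : Monoid.exponent (⊤ : Subgroup G) ∣ p ^ n := by
      rw [← hcard, ← Subgroup.card_top (G := G)]
      exact Group.exponent_dvd_nat_card
    obtain ⟨k, -, hk⟩ := (Nat.dvd_prime_pow hp).1 h5
    rw [ha, hk, hp.factorization_pow]
    simp
  let f : Option G → (Σ H : Subgroup G, {a : H // orderOf a = Monoid.exponent H}) := fun o =>
    match o with
    | none => ⟨⊤, a, ha⟩
    | some g => ⟨Subgroup.zpowers g, ⟨g, Subgroup.mem_zpowers g⟩, by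
        rw [IsCyclic.exponent_eq_card, Nat.card_zpowers, Subgroup.orderOf_mk]⟩
  have hf : Function.Injective f := by
    rintro (_ | g) (_ | h) hgh
    · rfl
    · exact absurd (congrArg Sigma.fst hgh).symm (hnc h)
    · exact absurd (congrArg Sigma.fst hgh) (hnc g)
    · have : ((f (some g)).2.1 : G) = ((f (some h)).2.1 : G) := by rw [hgh]
      exact congrArg some this
  have h6 := Nat.card_le_card_of_injective f hf
  rw [Finite.card_option, hcard] at h6
  omega
end

section
/- Let $n \geq 2$ and let $D_{2n}$ be the dihedral group of order $2n$. Then $S(D_{2n}) = 2n$ if and only if $n$ is odd. -/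
lemma SG_eq_card (G : Type*) [Group G] [Finite G] :
    SG G = Nat.card (Σ H : Subgroup G, {a : H // orderOf a = Monoid.exponent H}) := by
  classical
  have := Fintype.ofFinite (Subgroup G)
  unfold SG phiG
  rw [Nat.card_sigma, finsum_eq_sum_of_fintype]

/-- The canonical pair attached to an element. -/
noncomputable def canonPair (G : Type*) [Group G] (a : G) :
    (Σ H : Subgroup G, {a : H // orderOf a = Monoid.exponent H}) :=
  ⟨Subgroup.zpowers a, ⟨⟨a, Subgroup.mem_zpowers a⟩, by
    rw [IsCyclic.exponent_eq_card, Nat.card_zpowers, Subgroup.orderOf_mk]⟩⟩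

lemma canonPair_injective (G : Type*) [Group G] : Function.Injective (canonPair G) := by
  intro a b h
  exact congrArg (fun p : (Σ H : Subgroup G, {a : H // orderOf a = Monoid.exponent H}) =>
    (p.2.1 : G)) h

lemma SG_eq_iff (G : Type*) [Group G] [Finite G] :
    SG G = Nat.card G ↔ ∀ (H : Subgroup G) (a : H), orderOf a = Monoid.exponent H →
      H ≤ Subgroup.zpowers (a : G) := by
  rw [SG_eq_card]
  constructor
  · intro h H a ha
    have hb := (Nat.bijective_iff_injective_and_card (canonPair G)).2
      ⟨canonPair_injective G, h.symm⟩
    obtain ⟨b, hb⟩ := hb.2 ⟨H, ⟨a, ha⟩⟩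
    have h1 : Subgroup.zpowers b = H := congrArg Sigma.fst hb
    have h2 : b = (a : G) := congrArg
      (fun p : (Σ H : Subgroup G, {a : H // orderOf a = Monoid.exponent H}) => (p.2.1 : G)) hb
    rw [← h2, h1]
  · intro h
    symm
    refine ((Nat.bijective_iff_injective_and_card (canonPair G)).1
      ⟨canonPair_injective G, ?_⟩).2
    rintro ⟨H, ⟨⟨a, haH⟩, ha⟩⟩
    have h1 : H = Subgroup.zpowers a :=
      le_antisymm (h H ⟨a, haH⟩ ha) (Subgroup.zpowers_le.2 haH)
    refine ⟨a, ?_⟩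
    subst h1
    rfl

theorem stmt_12 (n : ℕ) (hn : 2 ≤ n) :
    SG (DihedralGroup n) = 2 * n ↔ Odd n := by
  have : NeZero n := ⟨by omega⟩
  rw [← DihedralGroup.nat_card, SG_eq_iff]
  constructor
  · intro h
    by_contra hodd
    rw [Nat.not_odd_iff_even] at hodd
    have h1 := h ⊤ ⟨DihedralGroup.r 1, Subgroup.mem_top _⟩ (by
      rw [Subgroup.orderOf_mk, DihedralGroup.orderOf_r_one,
        Monoid.exponent_eq_of_mulEquiv Subgroup.topEquiv, DihedralGroup.exponent]
      exact (Nat.lcm_eq_left hodd.two_dvd).symm)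
    obtain ⟨k, hk⟩ := Subgroup.mem_zpowers_iff.1 (h1 (Subgroup.mem_top (DihedralGroup.sr 0)))
    simp at hk
  · rintro hodd H ⟨a, haH⟩ ha
    rw [Subgroup.orderOf_mk] at ha
    have hdvd : ∀ g ∈ H, g ^ orderOf a = 1 := by
      intro g hg
      have := Monoid.pow_exponent_eq_one (⟨g, hg⟩ : H)
      rw [← ha] at this
      exact congrArg Subtype.val this
    cases a with
    | r i =>
      have hn1 : DihedralGroup.r i ^ n = 1 := by simp
      have ho : Odd (orderOf (DihedralGroup.r i)) :=
        Odd.of_dvd_nat hodd (orderOf_dvd_of_pow_eq_one hn1)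
      have hle : H ≤ Subgroup.zpowers (DihedralGroup.r (1 : ZMod n)) := by
        intro g hg
        cases g with
        | r j =>
          refine Subgroup.mem_zpowers_iff.2 ⟨(j.val : ℤ), ?_⟩
          simp
        | sr j =>
          exfalso
          have h2 := orderOf_dvd_of_pow_eq_one (hdvd _ hg)
          rw [DihedralGroup.orderOf_sr] at h2
          exact (Nat.not_even_iff_odd.2 ho) (even_iff_two_dvd.2 h2)
      have : IsCyclic H := Subgroup.isCyclic_of_le hle
      have hc : Nat.card H = orderOf (DihedralGroup.r i) := by
        rw [ha, IsCyclic.exponent_eq_card]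
      have : Subgroup.zpowers (DihedralGroup.r i) = H :=
        Subgroup.eq_of_le_of_card_ge (Subgroup.zpowers_le.2 haH)
          (by rw [Nat.card_zpowers, hc])
      exact this.ge
    | sr i =>
      rw [DihedralGroup.orderOf_sr] at hdvd
      have key : ∀ j : ZMod n, DihedralGroup.r j ∈ H → j = 0 := by
        intro j hj
        have h2 := orderOf_dvd_of_pow_eq_one (hdvd _ hj)
        have hn1 : DihedralGroup.r j ^ n = 1 := by simp
        have h3 := orderOf_dvd_of_pow_eq_one hn1
        have h4 := Nat.dvd_gcd h2 h3
        rw [(Nat.coprime_two_left.2 hodd : Nat.gcd 2 n = 1), Nat.dvd_one, orderOf_eq_one_iff,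
          DihedralGroup.one_def] at h4
        exact DihedralGroup.r.inj h4
      intro g hg
      cases g with
      | r j =>
        rw [key j hg]
        exact one_mem _
      | sr j =>
        have h5 := H.mul_mem haH hg
        simp only [DihedralGroup.sr_mul_sr] at h5
        rw [sub_eq_zero.1 (key _ h5)]
        exact Subgroup.mem_zpowers _
end

section
/- Let $n \geq 2$ be even, write $n = 2^k m$ with $k \geq 1$ and $m$ odd, and let $D_{2n}$ be the dihedral group of order $2n$. Then $S(D_{2n}) = 3n + \frac{kn}{2} \sum_{d \mid m} \frac{\varphi(d)}{d}$, where $\varphi$ denotes the classical Euler totient function and the sum runs over the positive divisors $d$ of $m$. -/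
open DihedralGroup

def rotS {n : ℕ} (A : AddSubgroup (ZMod n)) : Subgroup (DihedralGroup n) where
  carrier := {g | match g with | r x => x ∈ A | sr _ => False}
  mul_mem' := by
    rintro (x | x) (y | y) hx hy
    · exact A.add_mem hx hy
    · exact hy.elim
    · exact hx.elim
    · exact hx.elim
  one_mem' := A.zero_mem
  inv_mem' := by
    rintro (x | x) hx
    · exact A.neg_mem hx
    · exact hx.elim

def dihS {n : ℕ} (A : AddSubgroup (ZMod n)) (q : ZMod n ⧸ A) : Subgroup (DihedralGroup n) where
  carrier := {g | match g with | r x => x ∈ A | sr y => (QuotientAddGroup.mk y : ZMod n ⧸ A) = q}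
  mul_mem' := by
    rintro (x | x) (y | y) hx hy
    · exact A.add_mem hx hy
    · simp only [Set.mem_ofPred_eq] at hx hy ⊢
      simp only [r_mul_sr]
      rw [← hy, QuotientAddGroup.eq]
      simpa using hx
    · simp only [Set.mem_ofPred_eq] at hx hy ⊢
      simp only [sr_mul_r]
      rw [← hx, QuotientAddGroup.eq]
      simpa using hy
    · simp only [Set.mem_ofPred_eq] at hx hy ⊢
      simp only [sr_mul_sr]
      rw [← hy, QuotientAddGroup.eq] at hx
      rwa [sub_eq_neg_add]
  one_mem' := A.zero_mem
  inv_mem' := by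
    rintro (x | x) hx
    · exact A.neg_mem hx
    · exact hx

section
variable {n : ℕ}

theorem r_mem_rotS (A : AddSubgroup (ZMod n)) (x : ZMod n) : r x ∈ rotS A ↔ x ∈ A := Iff.rfl
theorem sr_mem_rotS (A : AddSubgroup (ZMod n)) (x : ZMod n) : sr x ∈ rotS A ↔ False := Iff.rfl
theorem r_mem_dihS (A : AddSubgroup (ZMod n)) (q) (x : ZMod n) : r x ∈ dihS A q ↔ x ∈ A := Iff.rfl
theorem sr_mem_dihS (A : AddSubgroup (ZMod n)) (q) (x : ZMod n) :
    sr x ∈ dihS A q ↔ (QuotientAddGroup.mk x : ZMod n ⧸ A) = q := Iff.rfl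

def toS : (AddSubgroup (ZMod n) ⊕ (Σ A : AddSubgroup (ZMod n), ZMod n ⧸ A)) →
    Subgroup (DihedralGroup n)
  | .inl A => rotS A
  | .inr p => dihS p.1 p.2

theorem toS_bij : Function.Bijective (toS (n := n)) := by
  constructor
  · rintro (A | ⟨A, q⟩) (B | ⟨B, q'⟩) h
    · have : A = B := by
        ext x
        rw [← r_mem_rotS, ← r_mem_rotS]
        exact iff_of_eq (congrArg (fun H => r x ∈ H) h)
      rw [this]
    · obtain ⟨y, rfl⟩ := QuotientAddGroup.mk_surjective q'
      exact ((iff_of_eq (congrArg (fun H => sr y ∈ H) h)).2 ((sr_mem_dihS _ _ _).2 rfl)).elim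
    · obtain ⟨y, rfl⟩ := QuotientAddGroup.mk_surjective q
      exact ((iff_of_eq (congrArg (fun H => sr y ∈ H) h)).1 ((sr_mem_dihS _ _ _).2 rfl)).elim
    · have : A = B := by
        ext x
        rw [← r_mem_dihS A q, ← r_mem_dihS B q']
        exact iff_of_eq (congrArg (fun H => r x ∈ H) h)
      subst this
      obtain ⟨y, rfl⟩ := QuotientAddGroup.mk_surjective q
      have := ((iff_of_eq (congrArg (fun H => sr y ∈ H) h)).1 ((sr_mem_dihS _ _ _).2 rfl))
      have := (sr_mem_dihS _ _ _).1 this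
      simp only at this
      rw [this]
  · intro H
    let A : AddSubgroup (ZMod n) :=
      { carrier := {x | r x ∈ H}
        add_mem' := fun {x y} hx hy => by
          simpa using H.mul_mem hx hy
        zero_mem' := H.one_mem
        neg_mem' := fun {x} hx => by simpa using H.inv_mem hx }
    have hA : ∀ x, x ∈ A ↔ r x ∈ H := fun _ => Iff.rfl
    by_cases h : ∃ y, sr y ∈ H
    · obtain ⟨y, hy⟩ := h
      refine ⟨.inr ⟨A, QuotientAddGroup.mk y⟩, ?_⟩
      ext (x | x)
      · exact Iff.rfl
      · refine (sr_mem_dihS _ _ _).trans ?_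
        simp only
        rw [QuotientAddGroup.eq, hA]
        constructor
        · intro h
          have := H.mul_mem hy (H.inv_mem h)
          simpa using this
        · intro h
          have := H.mul_mem h hy
          rwa [sr_mul_sr, sub_eq_neg_add] at this
    · refine ⟨.inl A, ?_⟩
      ext (x | x)
      · exact Iff.rfl
      · exact ⟨fun h => h.elim, fun h' => h ⟨x, h'⟩⟩

theorem card_dvd_iff [NeZero n] (A : AddSubgroup (ZMod n)) (d : ℕ) :
    Nat.card A ∣ d ↔ ∀ x ∈ A, d • x = 0 := by
  rw [← IsAddCyclic.exponent_eq_card, AddMonoid.exponent_dvd_iff_forall_nsmul_eq_zero]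
  constructor
  · intro h x hx
    exact congrArg Subtype.val (h ⟨x, hx⟩)
  · rintro h ⟨x, hx⟩
    exact Subtype.ext (h x hx)

theorem r_pow_eq_one (x : ZMod n) (d : ℕ) : (r x) ^ d = 1 ↔ d • x = 0 := by
  rw [r_pow, one_def, r.injEq, nsmul_eq_mul, mul_comm]

theorem orderOf_r' (x : ZMod n) : orderOf (r x) = addOrderOf x := by
  apply Nat.dvd_antisymm
  · rw [orderOf_dvd_iff_pow_eq_one, r_pow_eq_one]; exact addOrderOf_nsmul_eq_zero x
  · rw [addOrderOf_dvd_iff_nsmul_eq_zero, ← r_pow_eq_one]; exact pow_orderOf_eq_one _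

theorem exp_sub {G : Type*} [Group G] (H : Subgroup G) (d : ℕ) :
    Monoid.exponent H ∣ d ↔ ∀ x ∈ H, x ^ d = 1 := by
  rw [Monoid.exponent_dvd_iff_forall_pow_eq_one]
  constructor
  · intro h x hx
    exact congrArg Subtype.val (h ⟨x, hx⟩)
  · rintro h ⟨x, hx⟩
    exact Subtype.ext (h x hx)

theorem exp_rotS [NeZero n] (A : AddSubgroup (ZMod n)) :
    Monoid.exponent (rotS A) = Nat.card A := by
  refine Nat.dvd_right_iff_eq.1 fun d => ?_
  rw [exp_sub, card_dvd_iff]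
  constructor
  · intro h x hx
    exact (r_pow_eq_one _ _).1 (h (r x) hx)
  · rintro h (x | x) hx
    · exact (r_pow_eq_one _ _).2 (h x hx)
    · exact hx.elim

theorem exp_dihS [NeZero n] (A : AddSubgroup (ZMod n)) (q) :
    Monoid.exponent (dihS A q) = Nat.lcm (Nat.card A) 2 := by
  refine Nat.dvd_right_iff_eq.1 fun d => ?_
  rw [exp_sub, Nat.lcm_dvd_iff, card_dvd_iff]
  constructor
  · intro h
    refine ⟨fun x hx => (r_pow_eq_one _ _).1 (h (r x) hx), ?_⟩
    obtain ⟨y, rfl⟩ := QuotientAddGroup.mk_surjective q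
    rw [← orderOf_sr y, orderOf_dvd_iff_pow_eq_one]
    exact h _ rfl
  · rintro ⟨h, h2⟩ (x | x) hx
    · exact (r_pow_eq_one _ _).2 (h x hx)
    · rw [← orderOf_dvd_iff_pow_eq_one, orderOf_sr]; exact h2

open Classical in
theorem phi_sub [NeZero n] (H : Subgroup (DihedralGroup n)) :
    phiG H = (Finset.univ.filter fun x : ZMod n => r x ∈ H ∧ addOrderOf x = Monoid.exponent H).card
      + (Finset.univ.filter fun x : ZMod n => sr x ∈ H ∧ 2 = Monoid.exponent H).card := by
  unfold phiG
  have e : {a : H // orderOf a = Monoid.exponent H} ≃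
      {x : ZMod n // r x ∈ H ∧ addOrderOf x = Monoid.exponent H} ⊕
      {x : ZMod n // sr x ∈ H ∧ 2 = Monoid.exponent H} :=
    { toFun := fun a => match a with
        | ⟨⟨r x, hx⟩, h⟩ => .inl ⟨x, hx, by rw [← h, ← orderOf_r', Subgroup.orderOf_mk]⟩
        | ⟨⟨sr x, hx⟩, h⟩ => .inr ⟨x, hx, by rw [← h, Subgroup.orderOf_mk, orderOf_sr]⟩
      invFun := fun a => match a with
        | .inl x => ⟨⟨r x.1, x.2.1⟩, by rw [Subgroup.orderOf_mk, orderOf_r']; exact x.2.2⟩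
        | .inr x => ⟨⟨sr x.1, x.2.1⟩, by rw [Subgroup.orderOf_mk, orderOf_sr]; exact x.2.2⟩
      left_inv := by rintro ⟨⟨x | x, hx⟩, h⟩ <;> rfl
      right_inv := by rintro (x | x) <;> rfl }
  rw [Nat.card_congr e, Nat.card_sum, Nat.card_eq_fintype_card, Nat.card_eq_fintype_card,
    Fintype.card_subtype, Fintype.card_subtype]

open Classical in
theorem card_gen [NeZero n] (A : AddSubgroup (ZMod n)) :
    (Finset.univ.filter fun x : ZMod n => x ∈ A ∧ addOrderOf x = Nat.card A).card
      = Nat.totient (Nat.card A) := by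
  rw [← IsAddCyclic.card_addOrderOf_eq_totient (α := A) (d := Nat.card A)
    (by rw [Nat.card_eq_fintype_card]), ← Finset.card_map (Function.Embedding.subtype _)]
  congr 1
  ext x
  simp only [Finset.mem_filter, Finset.mem_univ, true_and, Finset.mem_map,
    Function.Embedding.subtype_apply, Subtype.exists, exists_and_right, exists_eq_right]
  constructor
  · rintro ⟨h, h'⟩; exact ⟨h, by rw [← h', AddSubgroup.addOrderOf_mk]⟩
  · rintro ⟨h, h'⟩; exact ⟨h, by rw [← h', AddSubgroup.addOrderOf_mk]⟩

theorem gen_iff [NeZero n] (A : AddSubgroup (ZMod n)) (x : ZMod n) :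
    (x ∈ A ∧ addOrderOf x = Nat.card A) ↔ AddSubgroup.zmultiples x = A := by
  constructor
  · rintro ⟨h, h'⟩
    refine AddSubgroup.eq_of_le_of_card_ge (by simpa using h) ?_
    rw [Nat.card_zmultiples, h']
  · rintro rfl
    exact ⟨AddSubgroup.mem_zmultiples x, (Nat.card_zmultiples x).symm⟩

theorem phi_rotS [NeZero n] (A : AddSubgroup (ZMod n)) :
    phiG (rotS A) = Nat.totient (Nat.card A) := by
  classical
  rw [phi_sub, exp_rotS, ← card_gen]
  simp [sr_mem_rotS, r_mem_rotS]

open Classical in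
theorem phi_dihS [NeZero n] (A : AddSubgroup (ZMod n)) (q) :
    phiG (dihS A q) = (if 2 ∣ Nat.card A then Nat.totient (Nat.card A) else 0) +
      (if Nat.card A ∣ 2 then
        (Finset.univ.filter fun x : ZMod n => (QuotientAddGroup.mk x : ZMod n ⧸ A) = q).card
       else 0) := by
  rw [phi_sub, exp_dihS]
  congr 1
  · split_ifs with h
    · rw [← card_gen, Nat.lcm_eq_left h]; rfl
    · rw [Finset.card_eq_zero, Finset.filter_eq_empty_iff]
      rintro x - ⟨hx, h'⟩
      apply h
      have h1 : addOrderOf x ∣ Nat.card A := by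
        rw [addOrderOf_dvd_iff_nsmul_eq_zero]
        exact (card_dvd_iff A _).1 dvd_rfl x hx
      rw [h'] at h1
      exact (Nat.dvd_lcm_right _ _).trans h1
  · split_ifs with h
    · rw [Nat.lcm_eq_right h]; simp [sr_mem_dihS]
    · rw [Finset.card_eq_zero, Finset.filter_eq_empty_iff]
      rintro x - ⟨hx, h'⟩
      exact h (h' ▸ Nat.dvd_lcm_left _ _)

open Classical in
theorem SG_eq [NeZero n] : SG (DihedralGroup n) =
    ∑ A : AddSubgroup (ZMod n), (Nat.totient (Nat.card A) +
      ((if 2 ∣ Nat.card A then n / Nat.card A * Nat.totient (Nat.card A) else 0) +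
      (if Nat.card A ∣ 2 then n else 0))) := by
  unfold SG
  have : ∀ A : AddSubgroup (ZMod n), Fintype (ZMod n ⧸ A) := fun A => Fintype.ofFinite _
  rw [finsum_eq_sum_of_fintype, ← (Equiv.ofBijective _ (toS_bij (n := n))).sum_comp]
  rw [Fintype.sum_sum_type, Fintype.sum_sigma, ← Finset.sum_add_distrib]
  refine Finset.sum_congr rfl fun A _ => ?_
  change phiG (rotS A) + ∑ q : ZMod n ⧸ A, phiG (dihS A q) = _
  rw [phi_rotS]
  congr 1
  simp only [phi_dihS]
  rw [Finset.sum_add_distrib]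
  have hc : Nat.card (ZMod n ⧸ A) = n / Nat.card A := by
    have := AddSubgroup.card_eq_card_quotient_mul_card_addSubgroup A
    rw [Nat.card_zmod] at this
    exact (Nat.div_eq_of_eq_mul_left Nat.card_pos this).symm
  congr 1
  · rw [Finset.sum_const, Finset.card_univ, ← Nat.card_eq_fintype_card, hc]
    split_ifs <;> simp
  · split_ifs
    · rw [← Finset.card_eq_sum_card_fiberwise (by simp)]
      simp [ZMod.card]
    · simp

open Classical in
theorem sum_sub [NeZero n] (f : ℕ → ℕ) :
    ∑ A : AddSubgroup (ZMod n), Nat.totient (Nat.card A) * f (Nat.card A) =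
      ∑ d ∈ n.divisors, Nat.totient d * f d := by
  have h1 : ∑ A : AddSubgroup (ZMod n), Nat.totient (Nat.card A) * f (Nat.card A) =
      ∑ x : ZMod n, f (addOrderOf x) := by
    rw [← Finset.sum_fiberwise Finset.univ (fun x : ZMod n => AddSubgroup.zmultiples x)]
    refine Finset.sum_congr rfl fun A _ => ?_
    rw [← card_gen, Finset.card_eq_sum_ones, Finset.sum_mul]
    simp only [gen_iff, one_mul]
    refine Finset.sum_congr rfl fun x hx => ?_
    rw [((gen_iff A x).2 (by simpa using hx)).2]
  rw [h1, ← Finset.sum_fiberwise_of_maps_to (t := n.divisors) (g := addOrderOf)]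
  · refine Finset.sum_congr rfl fun d hd => ?_
    rw [← IsAddCyclic.card_addOrderOf_eq_totient (α := ZMod n) (d := d)
      (by rw [ZMod.card]; exact Nat.dvd_of_mem_divisors hd), Finset.card_eq_sum_ones, Finset.sum_mul]
    refine Finset.sum_congr rfl fun x hx => ?_
    rw [(Finset.mem_filter.1 hx).2, one_mul]
  · intro x _
    rw [Nat.mem_divisors]
    refine ⟨?_, NeZero.ne n⟩
    simpa [ZMod.card] using addOrderOf_dvd_card (x := x)

theorem SG_eq2 [NeZero n] : SG (DihedralGroup n) =
    ∑ d ∈ n.divisors, Nat.totient d * (1 + ((if 2 ∣ d then n / d else 0) +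
      (if d ∣ 2 then n else 0))) := by
  rw [SG_eq, ← sum_sub]
  refine Finset.sum_congr rfl fun A _ => ?_
  rw [mul_add, mul_add, mul_one]
  congr 2
  · split_ifs
    · rw [mul_comm]
    · simp
  · split_ifs with h
    · rcases (Nat.dvd_prime Nat.prime_two).1 h with h | h <;> simp [h]
    · simp

theorem arith (m : ℕ) (hm : Odd m) (k : ℕ) :
    ∑ d ∈ (2 ^ k * m).divisors, (if 2 ∣ d then (Nat.totient d : ℚ) / d else 0) =
      k / 2 * ∑ d ∈ m.divisors, (Nat.totient d : ℚ) / d := by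
  have hc : (2 ^ k).Coprime m := Nat.Coprime.pow_left _ (Nat.coprime_two_left.2 hm)
  rw [Nat.divisors_mul, Finset.mul_def, Finset.sum_image hc.mul_injOn_divisors,
    Finset.sum_product, Nat.divisors_prime_pow Nat.prime_two, Finset.sum_map,
    Finset.sum_range_succ']
  have h0 : ∑ y ∈ m.divisors, (if 2 ∣ 2 ^ 0 * y then
      (Nat.totient (2 ^ 0 * y) : ℚ) / ((2 ^ 0 * y : ℕ) : ℚ) else 0) = 0 := by
    refine Finset.sum_eq_zero fun y hy => ?_
    rw [if_neg]
    rw [pow_zero, one_mul]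
    have := hm.of_dvd_nat (Nat.dvd_of_mem_divisors hy)
    rwa [← even_iff_two_dvd, Nat.not_even_iff_odd]
  have h1 : ∀ j ∈ Finset.range k, ∑ y ∈ m.divisors, (if 2 ∣ 2 ^ (j + 1) * y then
      (Nat.totient (2 ^ (j + 1) * y) : ℚ) / ((2 ^ (j + 1) * y : ℕ) : ℚ) else 0) =
      1 / 2 * ∑ d ∈ m.divisors, (Nat.totient d : ℚ) / d := by
    intro j _
    rw [Finset.mul_sum]
    refine Finset.sum_congr rfl fun y hy => ?_
    have ho := hm.of_dvd_nat (Nat.dvd_of_mem_divisors hy)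
    have hy0 : (y : ℚ) ≠ 0 := by exact_mod_cast (Nat.pos_of_mem_divisors hy).ne'
    rw [if_pos (Dvd.dvd.mul_right (dvd_pow_self 2 (by omega)) _),
      Nat.totient_mul (Nat.Coprime.pow_left _ (Nat.coprime_two_left.2 ho)),
      Nat.totient_prime_pow_succ Nat.prime_two]
    push_cast
    field_simp
    ring
  simp only [Function.Embedding.coeFn_mk]
  rw [h0, Finset.sum_congr rfl h1, Finset.sum_const, Finset.card_range, nsmul_eq_mul]
  ring
end

theorem stmt_13 (n k m : ℕ) (hn2 : 2 ≤ n) (hk : 1 ≤ k) (hm : Odd m)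
    (hn : n = 2 ^ k * m) :
    (SG (DihedralGroup n) : ℚ) =
      3 * n + (k * n / 2) * ∑ d ∈ m.divisors, (Nat.totient d : ℚ) / d := by
  have : NeZero n := ⟨by omega⟩
  have h2 : 2 ∣ n := by rw [hn]; exact Dvd.dvd.mul_right (dvd_pow_self 2 (by omega)) _
  have hA := arith m hm k
  rw [← hn] at hA
  have h3 : ∑ d ∈ n.divisors, Nat.totient d * (if d ∣ 2 then n else 0) = 2 * n := by
    have : ∑ d ∈ ({1, 2} : Finset ℕ), Nat.totient d * (if d ∣ 2 then n else 0) = 2 * n := by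
      simp; ring
    rw [← this]
    symm
    apply Finset.sum_subset
    · intro d hd
      simp only [Finset.mem_insert, Finset.mem_singleton] at hd
      rw [Nat.mem_divisors]
      rcases hd with rfl | rfl
      · exact ⟨one_dvd _, by omega⟩
      · exact ⟨h2, by omega⟩
    · intro d _ hd
      rw [if_neg, mul_zero]
      intro h
      rcases (Nat.dvd_prime Nat.prime_two).1 h with h | h <;> simp [h] at hd
  have h4 : ((∑ d ∈ n.divisors, Nat.totient d * (if 2 ∣ d then n / d else 0) : ℕ) : ℚ) =
      n * ∑ d ∈ n.divisors, (if 2 ∣ d then (Nat.totient d : ℚ) / d else 0) := by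
    rw [Nat.cast_sum, Finset.mul_sum]
    refine Finset.sum_congr rfl fun d hd => ?_
    have hd' := Nat.dvd_of_mem_divisors hd
    have : (d : ℚ) ≠ 0 := by exact_mod_cast (Nat.pos_of_mem_divisors hd).ne'
    split_ifs
    · rw [Nat.cast_mul, Nat.cast_div hd' this]; ring
    · simp
  rw [SG_eq2]
  simp only [mul_add, mul_one]
  rw [Finset.sum_add_distrib, Finset.sum_add_distrib, Nat.sum_totient, h3, Nat.cast_add,
    Nat.cast_add, h4, hA]
  push_cast
  ring
end

section
/- Let $G$ be a finite non-abelian group with a normal Hall subgroup $N$ that is cyclic of order $n$, and suppose $N$ has a complement $H$ in $G$ of prime order $p$ (so $|G| = np$ with $\gcd(n,p)=1$) such that the centralizer $C_N(H)$ is trivial. Let $n_p$ denote the number of complements of $N$ in $G$. Then $S(G) = n + n_p(p-1)$. -/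
theorem stmt_14 (G : Type*) [Group G] [Fintype G]
    (hna : ¬ ∀ a b : G, a * b = b * a)
    (N : Subgroup G) [N.Normal] (hNcyc : IsCyclic N)
    (n : ℕ) (hn : Nat.card N = n)
    (hHall : Nat.Coprime (Nat.card N) N.index)
    (p : ℕ) (hp : p.Prime)
    (H : Subgroup G) (hcomp : N.IsComplement' H) (hH : Nat.card H = p)
    (hcent : N ⊓ Subgroup.centralizer (H : Set G) = ⊥) :
    SG G = n + Nat.card {K : Subgroup G // N.IsComplement' K} * (p - 1) := by
  classical
  have hidx : N.index = p := by rw [← hH]; exact hcomp.symm.index_eq_card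
  have hcop : Nat.Coprime n p := by rw [← hn, ← hidx]; exact hHall
  have hcardG : n * p = Nat.card G := by
    rw [← hn, ← hidx]; exact N.card_mul_index
  -- a nontrivial element of a subgroup of prime order generates it
  have gen : ∀ (K : Subgroup G), Nat.card K = p → ∀ a ∈ K, a ≠ 1 → Subgroup.zpowers a = K := by
    intro K hK a ha h1
    apply Subgroup.eq_of_le_of_card_ge (by simpa using ha)
    rw [Nat.card_zpowers, hK]
    have h2 : orderOf a ∣ p := by
      rw [← hK]; exact Subgroup.orderOf_dvd_natCard K ha
    rcases (Nat.dvd_prime hp).1 h2 with h | h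
    · exact absurd (orderOf_eq_one_iff.1 h) h1
    · exact h.ge
  -- elements outside N have order p
  have key : ∀ a : G, a ∉ N → orderOf a = p := by
    intro a ha
    obtain ⟨⟨x, h⟩, hxh⟩ := hcomp.2 a
    simp only at hxh
    have hh1 : (h : G) ≠ 1 := by
      intro h1
      apply ha
      rw [← hxh, h1, mul_one]
      exact x.2
    have hgen := gen H hH h h.2 hh1
    let f : N → N := fun u => ⟨u * ((h : G) * (u : G)⁻¹ * (h : G)⁻¹),
      N.mul_mem u.2 (Subgroup.Normal.conj_mem inferInstance _ (N.inv_mem u.2) _)⟩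
    have hf : Function.Injective f := by
      intro u v huv
      have e : (u : G) * ((h : G) * (u : G)⁻¹ * (h : G)⁻¹)
          = v * ((h : G) * (v : G)⁻¹ * (h : G)⁻¹) := congrArg Subtype.val huv
      have e2 : (u : G) * h * (u : G)⁻¹ = v * h * (v : G)⁻¹ := by
        have := congrArg (fun z => z * (h : G)) e
        simpa [mul_assoc] using this
      have e3 : (h : G) * ((v : G)⁻¹ * u) = ((v : G)⁻¹ * u) * h := by
        have := congrArg (fun z => (v : G)⁻¹ * z * u) e2
        simp only [mul_assoc, inv_mul_cancel, mul_one, inv_mul_cancel_left] at this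
        simp only [mul_assoc]
        exact this.symm
      have hm : (v : G)⁻¹ * u ∈ N ⊓ Subgroup.centralizer (H : Set G) := by
        refine ⟨N.mul_mem (N.inv_mem v.2) u.2, ?_⟩
        refine Subgroup.mem_centralizer_iff.2 ?_
        intro z hz
        rw [← hgen] at hz
        obtain ⟨k, rfl⟩ := Subgroup.mem_zpowers_iff.1 hz
        exact (Commute.zpow_left e3 k)
      rw [hcent, Subgroup.mem_bot] at hm
      exact Subtype.ext (inv_mul_eq_one.1 hm).symm
    obtain ⟨u, hu⟩ := (Finite.injective_iff_surjective.1 hf) x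
    have e : (u : G) * ((h : G) * (u : G)⁻¹ * (h : G)⁻¹) = x := congrArg Subtype.val hu
    have hconj : a = MulAut.conj (u : G) (h : G) := by
      rw [← hxh, ← e, MulAut.conj_apply]; simp [mul_assoc]
    rw [hconj, MulEquiv.orderOf_eq, ← Nat.card_zpowers, hgen, hH]
  have keyN : ∀ a : G, a ∈ N → orderOf a ∣ n := by
    intro a ha
    rw [← hn]; exact Subgroup.orderOf_dvd_natCard N ha
  -- exponent characterisation
  have exq : ∀ (K : Subgroup G) (a : G) (ha : a ∈ K),
      orderOf a = Monoid.exponent K ↔ Subgroup.zpowers a = K := by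
    intro K a ha
    constructor
    · intro h
      have hk : ∀ k ∈ K, orderOf k ∣ orderOf a := by
        intro k hk
        rw [h, ← Subgroup.orderOf_mk k hk]
        exact Monoid.order_dvd_exponent _
      have hle : Subgroup.zpowers a ≤ K := by simpa using ha
      apply Subgroup.eq_of_le_of_card_ge hle
      rw [Nat.card_zpowers]
      by_cases haN : a ∈ N
      · have hKN : K ≤ N := by
          intro k hkK
          by_contra hkN
          have := hk k hkK
          rw [key k hkN] at this
          have h3 := Nat.dvd_gcd (this.trans (keyN a haN)) (dvd_refl p)
          rw [hcop] at h3
          exact hp.one_lt.ne' (Nat.dvd_one.1 h3)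
        have : IsCyclic K :=
          isCyclic_of_injective (Subgroup.inclusion hKN) (Subgroup.inclusion_injective hKN)
        rw [h, IsCyclic.exponent_eq_card]
      · rw [key a haN] at hk ⊢
        have hd : N ⊓ K = ⊥ := by
          rw [eq_bot_iff]
          rintro k ⟨hkN, hkK⟩
          have h3 := Nat.dvd_gcd (keyN k hkN) (hk k hkK)
          rw [hcop] at h3
          rw [Subgroup.mem_bot]
          exact orderOf_eq_one_iff.1 (Nat.dvd_one.1 h3)
        have h4 : N.relIndex K = Nat.card K := by
          rw [← Subgroup.inf_relIndex_right, hd, Subgroup.relIndex_bot_left]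
        have h5 := Subgroup.relIndex_dvd_index_of_normal N K
        rw [h4, hidx] at h5
        exact Nat.le_of_dvd hp.pos h5
    · rintro rfl
      rw [IsCyclic.exponent_eq_card, Nat.card_zpowers]
  have hphi : ∀ K : Subgroup G,
      phiG K = (Finset.univ.filter (fun a : G => Subgroup.zpowers a = K)).card := by
    intro K
    rw [phiG, ← Fintype.card_subtype, ← Nat.card_eq_fintype_card]
    refine Nat.card_congr
      { toFun := fun a => ⟨a.1.1, (exq K a.1.1 a.1.2).1 ((Subgroup.orderOf_coe a.1).trans a.2)⟩
        invFun := fun a => ⟨⟨a.1, a.2.le (Subgroup.mem_zpowers a.1)⟩, by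
          rw [Subgroup.orderOf_mk]
          exact (exq K a.1 (a.2.le (Subgroup.mem_zpowers a.1))).2 a.2⟩
        left_inv := fun a => rfl
        right_inv := fun a => rfl }
  have hS : SG G = Fintype.card G := by
    rw [SG, finsum_eq_sum_of_fintype, Finset.sum_congr rfl (fun K _ => hphi K)]
    rw [← Finset.card_univ]
    exact (Finset.card_eq_sum_card_fiberwise (fun a _ => Finset.mem_coe.2 (Finset.mem_univ _))).symm
  have hcardK : ∀ K : Subgroup G, N.IsComplement' K → Nat.card K = p := by
    intro K hK
    rw [← hidx]; exact hK.symm.index_eq_card.symm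
  have hout : (Finset.univ.filter (fun a : G => a ∉ N)).card =
      (Finset.univ.filter (fun K : Subgroup G => N.IsComplement' K)).card * (p - 1) := by
    rw [Finset.card_eq_sum_card_fiberwise (f := fun a : G => Subgroup.zpowers a)
      (t := Finset.univ.filter (fun K : Subgroup G => N.IsComplement' K))]
    · apply Finset.sum_const_nat
      intro K hK
      have hK' : N.IsComplement' K := (Finset.mem_filter.1 hK).2
      have hc := hcardK K hK'
      have : (Finset.univ.filter (fun a : G => a ∉ N)).filter (fun a => Subgroup.zpowers a = K)
          = (Finset.univ.filter (fun a : G => a ∈ K)).erase 1 := by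
        ext a
        simp only [Finset.mem_filter, Finset.mem_univ, true_and, Finset.mem_erase]
        constructor
        · rintro ⟨h1, h2⟩
          refine ⟨fun h => h1 (h ▸ N.one_mem), h2 ▸ Subgroup.mem_zpowers a⟩
        · rintro ⟨h1, h2⟩
          refine ⟨fun h => h1 ?_, gen K hc a h2 h1⟩
          exact Subgroup.disjoint_def.1 hK'.disjoint h h2
      rw [this, Finset.card_erase_of_mem (by simp [K.one_mem]), ← Fintype.card_subtype,
        ← Nat.card_eq_fintype_card]
      exact congrArg (· - 1) hc
    · intro a ha
      have ha' : a ∉ N := by simpa using ha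
      simp only [Finset.coe_filter, Finset.mem_univ, true_and, Set.mem_ofPred_eq]
      apply Subgroup.isComplement'_of_coprime
      · rw [Nat.card_zpowers, key a ha', hn, hcardG]
      · rw [Nat.card_zpowers, key a ha', hn]; exact hcop
  rw [hS, ← Finset.card_univ, ← Finset.card_filter_add_card_filter_not (fun a : G => a ∈ N), hout,
    Nat.card_eq_fintype_card (α := {K : Subgroup G // N.IsComplement' K}), Fintype.card_subtype,
    ← Fintype.card_subtype (fun a : G => a ∈ N), ← Nat.card_eq_fintype_card]
  congr 1
end

section
/- Let $G$ be a finite non-abelian group with a normal Hall subgroup $N$ that is cyclic of order $n$, and suppose $N$ has a complement $H$ in $G$ of prime order $p$ (so $|G| = np$ with $\gcd(n,p)=1$) such that the centralizer $C_N(H)$ is trivial. Then $S(G) = |G|$ if and only if the number of complements of $N$ in $G$ equals $n$. -/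
theorem SG_eq_card_of_isZGroup (G : Type*) [Group G] [Fintype G] [IsZGroup G] :
    SG G = Nat.card G := by
  classical
  have : Fintype (Subgroup G) := Fintype.ofFinite _
  unfold SG phiG
  rw [finsum_eq_sum_of_fintype, ← Nat.card_sigma]
  refine Nat.card_eq_of_bijective
    (fun x : (Σ K : Subgroup G, {a : K // orderOf a = Monoid.exponent K}) => (x.2.1 : G)) ⟨?_, ?_⟩
  · have key : ∀ (K : Subgroup G) (a : K), orderOf a = Monoid.exponent K →
        Subgroup.zpowers (a : G) = K := by
      intro K a ha
      apply Subgroup.eq_of_le_of_card_ge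
      · simp
      · rw [Nat.card_zpowers, Subgroup.orderOf_coe, ha, IsZGroup.exponent_eq_card]
    rintro ⟨K, a, ha⟩ ⟨L, b, hb⟩ hab
    dsimp only at hab
    have h1 := key K a ha
    have h2 := key L b hb
    rw [hab, h2] at h1
    subst h1
    have : a = b := Subtype.ext hab
    subst this
    rfl
  · intro g
    refine ⟨⟨Subgroup.zpowers g, ⟨g, Subgroup.mem_zpowers g⟩, ?_⟩, rfl⟩
    rw [IsZGroup.exponent_eq_card, Nat.card_zpowers, ← Subgroup.orderOf_coe]

theorem stmt_15 (G : Type*) [Group G] [Fintype G]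
    (hna : ¬ ∀ a b : G, a * b = b * a)
    (N : Subgroup G) [N.Normal] (hNcyc : IsCyclic N)
    (n : ℕ) (hn : Nat.card N = n)
    (hHall : Nat.Coprime (Nat.card N) N.index)
    (p : ℕ) (hp : p.Prime)
    (H : Subgroup G) (hcomp : N.IsComplement' H) (hH : Nat.card H = p)
    (hcent : N ⊓ Subgroup.centralizer (H : Set G) = ⊥) :
    SG G = Nat.card G ↔ Nat.card {K : Subgroup G // N.IsComplement' K} = n := by
  have := Fact.mk hp
  have hidx : N.index = p := by rw [hcomp.symm.index_eq_card, hH]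
  have hcard : Nat.card N * p = Nat.card G := by rw [← hidx, N.card_mul_index]
  rw [hidx] at hHall
  have hZ : IsZGroup G := by
    have hq : Nat.card (G ⧸ N) = p := hidx
    have : IsCyclic (G ⧸ N) := isCyclic_of_prime_card hq
    refine isZGroup_of_coprime (f := N.subtype) (f' := QuotientGroup.mk' N) ?_ ?_
    · simp
    · rwa [hq]
  refine iff_of_true (SG_eq_card_of_isZGroup G) ?_
  have hfac : p ^ (Nat.card G).factorization p = p := by
    have h0 : ¬ p ∣ Nat.card N := (Nat.Prime.coprime_iff_not_dvd hp).1 hHall.symm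
    rw [← hcard, Nat.factorization_mul Nat.card_pos.ne' hp.ne_zero]
    simp [Nat.factorization_eq_zero_of_not_dvd h0, hp.factorization_self]
  have hiff : ∀ K : Subgroup G, N.IsComplement' K ↔ Nat.card K = p := by
    intro K
    constructor
    · intro h
      rw [← h.symm.index_eq_card, hidx]
    · intro h
      exact Subgroup.isComplement'_of_coprime (by rw [h, hcard]) (by rwa [h])
  have hnorm : Subgroup.normalizer (H : Set G) = H := by
    apply le_antisymm _ Subgroup.le_normalizer
    intro x hx
    obtain ⟨⟨a, h⟩, hah⟩ := hcomp.2 x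
    have ha : (a : G) ∈ Subgroup.normalizer (H : Set G) := by
      have : (a : G) = x * (h : G)⁻¹ := by rw [← hah]; simp
      rw [this]
      exact mul_mem hx (inv_mem (Subgroup.le_normalizer h.2))
    have ha1 : (a : G) ∈ N ⊓ Subgroup.centralizer (H : Set G) := by
      refine Subgroup.mem_inf.2 ⟨a.2, ?_⟩
      rw [Subgroup.mem_centralizer_iff]
      intro k hk
      have h1 : (a : G) * k * (a : G)⁻¹ * k⁻¹ ∈ H :=
        mul_mem ((Subgroup.mem_normalizer_iff.1 ha k).1 hk) (inv_mem hk)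
      have h2 : (a : G) * k * (a : G)⁻¹ * k⁻¹ ∈ N := by
        have := mul_mem a.2 (‹N.Normal›.conj_mem _ (inv_mem a.2) k)
        simpa [mul_assoc] using this
      have h3 := Subgroup.disjoint_def.1 hcomp.disjoint h2 h1
      rw [mul_inv_eq_one, mul_inv_eq_iff_eq_mul] at h3
      exact h3.symm
    rw [hcent, Subgroup.mem_bot] at ha1
    have : x = h := by rw [← hah]; simp [ha1]
    rw [this]
    exact h.2
  let P : Sylow p G := Sylow.ofCard H (by rw [hH, hfac])
  have hP : (P : Subgroup G) = H := rfl
  have hS : Nat.card (Sylow p G) = n := by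
    rw [Sylow.card_eq_index_normalizer P, ← hn, ← hcomp.index_eq_card]
    exact congrArg Subgroup.index hnorm
  rw [← hS]
  symm
  refine Nat.card_eq_of_bijective
    (fun Q : Sylow p G => (⟨Q, (hiff _).2 (by rw [Sylow.card_eq_multiplicity, hfac])⟩ :
      {K : Subgroup G // N.IsComplement' K})) ⟨?_, ?_⟩
  · intro Q R h
    exact Sylow.ext (congrArg Subtype.val h)
  · rintro ⟨K, hK⟩
    exact ⟨Sylow.ofCard K (by rw [(hiff K).1 hK, hfac]), rfl⟩
end

section
/- Let $p < q$ be primes with $p \mid q - 1$, and let $G$ be a non-abelian group of order $pq$. Then $S(G) = pq = |G|$. -/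
theorem exponent_eq_card_of_squarefree (H : Type*) [Group H] [Finite H]
    (h : Squarefree (Nat.card H)) : Monoid.exponent H = Nat.card H := by
  refine Nat.dvd_antisymm Group.exponent_dvd_nat_card ?_
  rw [← Nat.prod_primeFactors_of_squarefree h]
  refine Finset.prod_primes_dvd _ (fun r hr => (Nat.prime_of_mem_primeFactors hr).prime) ?_
  intro r hr
  have : Fact r.Prime := ⟨Nat.prime_of_mem_primeFactors hr⟩
  obtain ⟨g, hg⟩ := exists_prime_orderOf_dvd_card' r (Nat.dvd_of_mem_primeFactors hr)
  rw [← hg]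
  exact Monoid.order_dvd_exponent g

theorem stmt_16 (p q : ℕ) (hp : p.Prime) (hq : q.Prime) (hpq : p < q)
    (hdvd : p ∣ q - 1) (G : Type*) [Group G] [Fintype G]
    (hcard : Nat.card G = p * q) (hna : ¬ ∀ a b : G, a * b = b * a) :
    SG G = p * q := by
  have hsq : Squarefree (Nat.card G) := by
    rw [hcard]
    exact (Nat.squarefree_mul ((Nat.coprime_primes hp hq).2 hpq.ne)).2
      ⟨hp.prime.squarefree, hq.prime.squarefree⟩
  have hexp (H : Subgroup G) : Monoid.exponent H = Nat.card H :=
    exponent_eq_card_of_squarefree H (Squarefree.squarefree_of_dvd H.card_subgroup_dvd_card hsq)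
  have hz (H : Subgroup G) (a : H) (ha : orderOf a = Monoid.exponent H) :
      Subgroup.zpowers (a : G) = H := by
    refine Subgroup.eq_of_le_of_card_ge (by simp) ?_
    rw [Nat.card_zpowers, Subgroup.orderOf_coe, ha, hexp]
  let e : (Σ H : Subgroup G, {a : H // orderOf a = Monoid.exponent H}) ≃ G :=
    Equiv.ofBijective (fun x => ((x.2 : x.1) : G)) (by
      constructor
      · rintro ⟨H, a, ha⟩ ⟨K, b, hb⟩ hab
        have hab' : (a : G) = b := hab
        have hHK : H = K := by rw [← hz H a ha, ← hz K b hb, hab']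
        subst hHK
        have : a = b := Subtype.ext hab'
        subst this
        rfl
      · intro g
        refine ⟨⟨Subgroup.zpowers g, ⟨g, Subgroup.mem_zpowers g⟩, ?_⟩, rfl⟩
        rw [hexp, Nat.card_zpowers, Subgroup.orderOf_mk])
  classical
  have : Fintype (Subgroup G) := Fintype.ofFinite _
  rw [← hcard, ← Nat.card_congr e, Nat.card_sigma, SG, finsum_eq_sum_of_fintype]
  rfl
end

section
/- Let $p$ be a prime, $r \geq 2$, and let $G$ be a finite abelian $p$-group of rank $r$ (i.e., $G$ is a direct product of $r$ nontrivial cyclic $p$-groups). Then $S(G) \geq |G| \cdot \frac{p^r + p^2 - p - 1}{p^2} + 1$, and in particular $S(G) > |G| + 1$. -/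
open scoped Classical in
theorem phi_bound (p : ℕ) (hp : p.Prime) (H : Type*) [CommGroup H] [Finite H]
    (hpg : IsPGroup p H) [Nontrivial H] :
    p * Nat.card H ≤ p * phiG H + Nat.card H := by
  have : Fact p.Prime := ⟨hp⟩
  obtain ⟨x, hx⟩ := Monoid.exists_orderOf_eq_exponent (Monoid.ExponentExists.of_finite (G := H))
  obtain ⟨e, he⟩ := (IsPGroup.iff_orderOf.mp hpg) x
  have hexp : Monoid.exponent H = p ^ e := by rw [← hx, he]
  have he0 : e ≠ 0 := by
    rintro rfl
    rw [pow_zero, Monoid.exp_eq_one_iff] at hexp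
    exact not_subsingleton H hexp
  obtain ⟨k, rfl⟩ := Nat.exists_eq_succ_of_ne_zero he0
  set K : Subgroup H := (powMonoidHom (p ^ k) : H →* H).ker with hK
  have hxK : x ∉ K := by
    intro h
    rw [hK, MonoidHom.mem_ker, powMonoidHom_apply] at h
    have := orderOf_dvd_of_pow_eq_one h
    rw [he] at this
    have := (Nat.pow_dvd_pow_iff_le_right hp.one_lt).mp this
    omega
  have hidx : p ≤ K.index := by
    obtain ⟨n, hn⟩ := IsPGroup.iff_card.mp hpg
    have h1 : K.index ∣ p ^ n := hn ▸ K.index_dvd_card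
    obtain ⟨m, -, hm⟩ := (Nat.dvd_prime_pow hp).mp h1
    rcases Nat.eq_zero_or_pos m with rfl | hm0
    · rw [pow_zero, Subgroup.index_eq_one] at hm
      exact absurd (hm ▸ Subgroup.mem_top x) hxK
    · rw [hm]; exact Nat.le_self_pow hm0.ne' p
  have hcard : Nat.card K * p ≤ Nat.card H := by
    rw [← K.card_mul_index]; gcongr
  have hphi : Nat.card H ≤ phiG H + Nat.card K := by
    have : Fintype H := Fintype.ofFinite H
    have hsub : {a : H | orderOf a = Monoid.exponent H}ᶜ ⊆ (K : Set H) := by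
      intro a ha
      simp only [Set.mem_compl_iff, Set.mem_ofPred_eq] at ha
      have h1 : orderOf a ∣ p ^ (k + 1) := hexp ▸ Monoid.order_dvd_exponent a
      obtain ⟨m, hm, hm'⟩ := (Nat.dvd_prime_pow hp).mp h1
      have : m ≤ k := by
        by_contra hc
        have : m = k + 1 := by omega
        exact ha (by rw [hm', this, hexp])
      show a ∈ K
      rw [hK, MonoidHom.mem_ker, powMonoidHom_apply]
      exact orderOf_dvd_iff_pow_eq_one.mp (hm' ▸ pow_dvd_pow p this)
    have h2 := Set.ncard_le_ncard hsub
    have h3 := Set.ncard_add_ncard_compl {a : H | orderOf a = Monoid.exponent H}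
    have h4 : phiG H = Set.ncard {a : H | orderOf a = Monoid.exponent H} := rfl
    have h5 : Nat.card K = Set.ncard (K : Set H) := rfl
    omega
  nlinarith [Nat.mul_le_mul_left p hphi]

open scoped Classical in
theorem card_hom_ge_aux (p : ℕ) (hp : p.Prime) [Fact p.Prime] (G : Type*) [CommGroup G] [Finite G]
    (hpg : IsPGroup p G) (V : Type*) [AddCommGroup V] [Module (ZMod p) V] [Finite V]
    (q : Additive G →+ V) (hq : Function.Surjective q)
    (hker : ∀ x, q x = 0 → ∃ y : Additive G, p • y = x) :
    p ^ Group.rank G ≤ Nat.card (G →* Multiplicative (ZMod p)) := by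
  have : Module.Finite (ZMod p) V := Module.Finite.of_finite
  set d := Module.finrank (ZMod p) V with hd
  have hrank : Group.rank G ≤ d := by
    let b : Module.Basis (Fin d) (ZMod p) V := Module.finBasis (ZMod p) V
    choose g hg using fun i => hq (b i)
    let S : Finset G := Finset.univ.image (fun i => (g i).toMul)
    have hS : Subgroup.closure (S : Set G) = ⊤ := by
      set H := Subgroup.closure (S : Set G) with hH
      have key : ∀ x : G, ∃ h ∈ H, ∃ y : G, x = h * y ^ p := by
        intro x
        let T : AddSubgroup V := H.toAddSubgroup.map q
        have hT : ∀ v, v ∈ T := by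
          intro v
          rw [← b.sum_repr v]
          refine T.sum_mem fun i _ => ?_
          refine ZMod.smul_mem (K := T) ?_ _
          refine ⟨g i, ?_, hg i⟩
          show (g i).toMul ∈ H
          exact Subgroup.subset_closure (by simp [S])
        obtain ⟨h, hh, hx⟩ := hT (q (Additive.ofMul x))
        obtain ⟨y, hy⟩ := hker (-h + Additive.ofMul x) (by rw [map_add, map_neg, hx, neg_add_cancel])
        refine ⟨h.toMul, hh, y.toMul, ?_⟩
        have hy' : y.toMul ^ p = h.toMul⁻¹ * x := hy
        rw [hy']; simp
      have key2 : ∀ n : ℕ, ∀ x : G, ∃ h ∈ H, ∃ y : G, x = h * y ^ (p ^ n) := by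
        intro n
        induction n with
        | zero => intro x; exact ⟨1, H.one_mem, x, by simp⟩
        | succ n ih =>
          intro x
          obtain ⟨h, hh, y, rfl⟩ := ih x
          obtain ⟨h', hh', z, rfl⟩ := key y
          refine ⟨h * h' ^ (p ^ n), H.mul_mem hh (H.pow_mem hh' _), z, ?_⟩
          rw [mul_pow, ← pow_mul, pow_succ' p n, mul_assoc]
      obtain ⟨n, hn⟩ := IsPGroup.iff_card.mp hpg
      rw [eq_top_iff]
      intro x _
      obtain ⟨h, hh, y, rfl⟩ := key2 n x
      rw [← hn, pow_card_eq_one', mul_one]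
      exact hh
    refine (Group.rank_le hS).trans (Finset.card_image_le.trans ?_)
    simp [hd]
  have hdual : Nat.card (Module.Dual (ZMod p) V) = p ^ d := by
    rw [Module.natCard_eq_pow_finrank (K := ZMod p), Subspace.dual_finrank_eq, Nat.card_zmod]
  have hfinhom : Finite (G →* Multiplicative (ZMod p)) := by
    have : Finite (Multiplicative (ZMod p)) := inferInstanceAs (Finite (ZMod p))
    exact Finite.of_injective (fun f => (f : G → Multiplicative (ZMod p))) DFunLike.coe_injective
  calc p ^ Group.rank G ≤ p ^ d := Nat.pow_le_pow_right hp.pos hrank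
    _ = _ := hdual.symm
    _ ≤ _ := by
      refine Nat.card_le_card_of_injective
        (fun f => AddMonoidHom.toMultiplicativeRight (f.toAddMonoidHom.comp q)) ?_
      intro f f' h
      have h' := AddMonoidHom.toMultiplicativeRight.injective h
      ext v
      obtain ⟨x, rfl⟩ := hq v
      exact DFunLike.congr_fun h' x

theorem card_hom_ge (p : ℕ) (hp : p.Prime) (G : Type*) [CommGroup G] [Finite G]
    (hpg : IsPGroup p G) :
    p ^ Group.rank G ≤ Nat.card (G →* Multiplicative (ZMod p)) := by
  have : Fact p.Prime := ⟨hp⟩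
  let R : AddSubgroup (Additive G) := (nsmulAddMonoidHom p : Additive G →+ Additive G).range
  let : Module (ZMod p) (Additive G ⧸ R) := AddCommGroup.zmodModule (by
    intro x
    obtain ⟨y, rfl⟩ := QuotientAddGroup.mk_surjective x
    rw [← QuotientAddGroup.mk_nsmul, QuotientAddGroup.eq_zero_iff]
    exact ⟨y, rfl⟩)
  refine card_hom_ge_aux p hp G hpg (Additive G ⧸ R) (QuotientAddGroup.mk' R)
    (QuotientAddGroup.mk'_surjective R) ?_
  intro x hx
  exact (QuotientAddGroup.eq_zero_iff x).mp hx

theorem ker_index (p : ℕ) (hp : p.Prime) (G : Type*) [CommGroup G]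
    (f : G →* Multiplicative (ZMod p)) (hf : f ≠ 1) : f.ker.index = p := by
  have : Fact p.Prime := ⟨hp⟩
  have hc : Nat.card (Multiplicative (ZMod p)) = p := by
    rw [Nat.card_congr Multiplicative.toAdd, Nat.card_zmod]
  rw [Subgroup.index_ker]
  have hd : Nat.card f.range ∣ p := by
    have := f.range.card_subgroup_dvd_card
    rwa [hc] at this
  rcases (Nat.dvd_prime hp).mp hd with h | h
  · rw [Subgroup.card_eq_one] at h
    exact absurd ((MonoidHom.range_eq_bot_iff).mp h) hf
  · exact h

open scoped Classical in
theorem count_bound (p : ℕ) (hp : p.Prime) (G : Type*) [CommGroup G] [Fintype G]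
    (hpg : IsPGroup p G) :
    p ^ Group.rank G ≤ (p - 1) * (Finset.univ.filter fun H : Subgroup G => H.index = p).card + 1 := by
  have : Fact p.Prime := ⟨hp⟩
  have hfinhom : Finite (G →* Multiplicative (ZMod p)) := by
    have : Finite (Multiplicative (ZMod p)) := inferInstanceAs (Finite (ZMod p))
    exact Finite.of_injective (fun f => (f : G → Multiplicative (ZMod p))) DFunLike.coe_injective
  let : Fintype (G →* Multiplicative (ZMod p)) := Fintype.ofFinite _
  have h1 := card_hom_ge p hp G hpg
  have h2 : (Finset.univ.erase (1 : G →* Multiplicative (ZMod p))).card ≤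
      (p - 1) * (Finset.univ.filter fun H : Subgroup G => H.index = p).card := by
    refine Finset.card_le_mul_card_image_of_maps_to (f := fun f => f.ker) ?_ _ ?_
    · intro f hf
      simp only [Finset.mem_erase, Finset.mem_univ, and_true] at hf
      simp [ker_index p hp G f hf]
    · intro M hM
      simp only [Finset.mem_filter, Finset.mem_univ, true_and] at hM
      obtain ⟨g, hg⟩ : ∃ g, g ∉ M := by
        by_contra hc
        push Not at hc
        have : M = ⊤ := by ext; simp [hc]
        rw [this, Subgroup.index_top] at hM
        exact hp.one_lt.ne hM
      have hcard : (Finset.univ.erase (0 : ZMod p)).card = p - 1 := by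
        rw [Finset.card_erase_of_mem (Finset.mem_univ _), Finset.card_univ, ZMod.card]
      rw [← hcard]
      refine Finset.card_le_card_of_injOn (fun f => (f g).toAdd) ?_ ?_
      · intro f hf
        simp only [Finset.coe_filter, Finset.mem_erase, Finset.mem_univ, and_true, Set.mem_ofPred_eq] at hf
        simp only [Finset.coe_erase, Finset.coe_univ, Set.mem_sdiff, Set.mem_univ, true_and,
          Set.mem_singleton_iff]
        intro h
        apply hg
        rw [← hf.2, MonoidHom.mem_ker]
        exact h
      · intro f hf f' hf' h
        simp only [Finset.coe_filter, Finset.mem_erase, Finset.mem_univ, and_true, Set.mem_ofPred_eq] at hf hf'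
        have h : f g = f' g := h
        have hle : M ≤ f.eqLocus f' := by
          intro x hx
          show f x = f' x
          rw [(MonoidHom.mem_ker (f := f)).mp (hf.2 ▸ hx), (MonoidHom.mem_ker (f := f')).mp (hf'.2 ▸ hx)]
        have htop : f.eqLocus f' = ⊤ := by
          have hd := Subgroup.index_dvd_of_le hle
          rw [hM] at hd
          rcases (Nat.dvd_prime hp).mp hd with h' | h'
          · exact Subgroup.index_eq_one.mp h'
          · exfalso
            have := Subgroup.relIndex_mul_index hle
            rw [h', hM] at this
            have h1 : M.relIndex (f.eqLocus f') = 1 :=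
              Nat.eq_of_mul_eq_mul_right hp.pos (by rw [this, one_mul])
            exact hg (Subgroup.relIndex_eq_one.mp h1 h)
        ext x
        have : x ∈ f.eqLocus f' := htop ▸ Subgroup.mem_top x
        exact this
  rw [Finset.card_erase_of_mem (Finset.mem_univ _), Finset.card_univ, ← Nat.card_eq_fintype_card] at h2
  omega

theorem stmt_18 (p : ℕ) (hp : p.Prime) (G : Type*) [CommGroup G] [Fintype G]
    (hpg : IsPGroup p G) (r : ℕ) (hr : Group.rank G = r) (hr2 : 2 ≤ r) :
    (SG G : ℚ) ≥ (Nat.card G : ℚ) * (((p : ℚ) ^ r + p ^ 2 - p - 1) / p ^ 2) + 1 ∧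
      SG G > Nat.card G + 1 := by
  classical
  have hncyc : ¬ IsCyclic G := by
    intro h
    obtain ⟨g, hg⟩ := h.exists_generator
    have h1 : Group.rank G ≤ ({g} : Finset G).card := by
      refine Group.rank_le ?_
      rw [eq_top_iff]
      intro x _
      simpa [← Subgroup.zpowers_eq_closure] using hg x
    simp at h1
    omega
  have hnt : Nontrivial G := by
    by_contra hc
    rw [not_nontrivial_iff_subsingleton] at hc
    exact hncyc inferInstance
  set F := Finset.univ.filter fun H : Subgroup G => H.index = p with hF
  have hcnt : p ^ r ≤ (p - 1) * F.card + 1 := hr ▸ count_bound p hp G hpg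
  have hphiG := phi_bound p hp G hpg
  have hphiM : ∀ M ∈ F, Nontrivial M ∧ (p : ℚ) ^ 2 * phiG M ≥ (p - 1) * Nat.card G := by
    intro M hM
    simp only [hF, Finset.mem_filter, Finset.mem_univ, true_and] at hM
    have hMc := M.card_mul_index
    rw [hM] at hMc
    have hM1 : Nontrivial M := by
      rw [Subgroup.nontrivial_iff_ne_bot]
      rintro rfl
      rw [Subgroup.card_bot, one_mul] at hMc
      have : Fact p.Prime := ⟨hp⟩
      exact hncyc (isCyclic_of_prime_card hMc.symm)
    refine ⟨hM1, ?_⟩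
    have h := phi_bound p hp M (hpg.to_subgroup M)
    have h' : (p : ℚ) * Nat.card M ≤ p * phiG M + Nat.card M := by exact_mod_cast h
    rw [← hMc]
    push_cast
    have hp0 : (0 : ℚ) ≤ p := by positivity
    nlinarith [mul_le_mul_of_nonneg_left h' hp0]
  have hbot : phiG (⊥ : Subgroup G) = 1 := by
    have : ∀ a : (⊥ : Subgroup G), orderOf a = Monoid.exponent (⊥ : Subgroup G) := by
      intro a
      rw [Subsingleton.elim a 1, orderOf_one, eq_comm, Monoid.exp_eq_one_iff]
      infer_instance
    simp [phiG, this]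
  have htop : phiG (⊤ : Subgroup G) = phiG G := by
    unfold phiG
    rw [Monoid.exponent_eq_of_mulEquiv (Subgroup.topEquiv (G := G))]
    refine Nat.card_congr (Subgroup.topEquiv.toEquiv.subtypeEquiv ?_)
    intro a
    simp
  have hSG : phiG G + 1 + ∑ M ∈ F, phiG M ≤ SG G := by
    have h1 : (⊤ : Subgroup G) ∉ F := by simp [hF, hp.one_lt.ne]
    have h2 : (⊥ : Subgroup G) ∉ insert ⊤ F := by
      rw [Finset.mem_insert, not_or]
      refine ⟨bot_ne_top, fun h => ?_⟩
      exact (Subgroup.nontrivial_iff_ne_bot _).mp (hphiM _ h).1 rfl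
    rw [SG, finsum_eq_sum_of_fintype]
    refine le_trans (le_of_eq ?_) (Finset.sum_le_sum_of_subset (Finset.subset_univ (insert ⊥ (insert ⊤ F))))
    rw [Finset.sum_insert h2, Finset.sum_insert h1, hbot, htop]
    ring
  have hsum : (F.card : ℚ) * ((p - 1) * Nat.card G) ≤ p ^ 2 * ∑ M ∈ F, (phiG M : ℚ) := by
    rw [Finset.mul_sum, ← nsmul_eq_mul]
    exact Finset.card_nsmul_le_sum _ _ _ fun M hM => (hphiM M hM).2
  have hSG' : (phiG G : ℚ) + 1 + ∑ M ∈ F, (phiG M : ℚ) ≤ SG G := by exact_mod_cast hSG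
  have hphiG' : (p : ℚ) * Nat.card G ≤ p * phiG G + Nat.card G := by exact_mod_cast hphiG
  have hcnt' : (p : ℚ) ^ r ≤ (p - 1) * F.card + 1 := by
    have : ((p ^ r : ℕ) : ℚ) ≤ (((p - 1) * F.card + 1 : ℕ) : ℚ) := by exact_mod_cast hcnt
    rw [Nat.cast_add, Nat.cast_mul, Nat.cast_sub hp.one_le] at this
    simpa using this
  have hp2 : (2 : ℚ) ≤ p := by exact_mod_cast hp.two_le
  have hn : (0 : ℚ) < Nat.card G := by exact_mod_cast Nat.card_pos
  have hpp : (0 : ℚ) < (p : ℚ) ^ 2 := by positivity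
  have main : (SG G : ℚ) ≥ (Nat.card G : ℚ) * (((p : ℚ) ^ r + p ^ 2 - p - 1) / p ^ 2) + 1 := by
    have h3 : (Nat.card G : ℚ) * ((p : ℚ) ^ r + p ^ 2 - p - 1) ≤ (SG G - 1) * p ^ 2 := by
      have e1 := mul_le_mul_of_nonneg_left hphiG' (by linarith : (0 : ℚ) ≤ p)
      have e2 := mul_le_mul_of_nonneg_left hcnt' hn.le
      have e3 := mul_le_mul_of_nonneg_left hSG' hpp.le
      linarith
    rw [← mul_div_assoc, ge_iff_le, ← le_sub_iff_add_le, div_le_iff₀ hpp]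
    exact h3
  refine ⟨main, ?_⟩
  have hr' : (p : ℚ) ^ 2 ≤ (p : ℚ) ^ r := pow_le_pow_right₀ (by linarith) hr2
  have h1 : (1 : ℚ) < ((p : ℚ) ^ r + p ^ 2 - p - 1) / p ^ 2 := by
    rw [lt_div_iff₀ hpp]
    nlinarith
  have : (Nat.card G : ℚ) + 1 < SG G := by nlinarith
  exact_mod_cast this
end
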